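/- arXiv:1804.01589 — 4 statements merged into one kernel-verified Lean document; each statement's English description precedes it below -/
import Mathlib

section
/- Let G be an abelian group and U a G-graded simple algebra such that M(U) satisfies an ordinary polynomial identity, and let F denote the field Γ(U)_e. For any field extension F̃ of F, the algebra Ũ = F̃ ⊗_F U (with grading Ũ_g = F̃ ⊗_F U_g) is a G-graded simple F̃-algebra, M(Ũ) satisfies an ordinary polynomial identity, F̃ ⊗_F M(U) is isomorphic to M(Ũ) as a G-graded algebra, and the center of M(Ũ) is isomorphic as a G-graded algebra to F̃ ⊗_F Γ(U). -/
noncomputable section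

variable (K : Type*) [Field K]
variable {G : Type*} [CommGroup G] [DecidableEq G]
variable {A : Type*} [NonUnitalNonAssocSemiring A] [Module K A]
  [SMulCommClass K A A] [IsScalarTower K A A]

/-- `𝒜` is a `G`-grading of the (not necessarily associative or unital) algebra `A`. -/
def IsAlgGrading (𝒜 : G → Submodule K A) : Prop :=
  DirectSum.IsInternal 𝒜 ∧ ∀ (g h : G), ∀ a ∈ 𝒜 g, ∀ b ∈ 𝒜 h, a * b ∈ 𝒜 (g * h)

/-- A submodule is homogeneous if it is the sum of its intersections with the components. -/
def IsHomogSubmodule (𝒜 : G → Submodule K A) (I : Submodule K A) : Prop :=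
  I = ⨆ g, I ⊓ 𝒜 g

/-- two-sided ideal of a nonassociative algebra -/
def IsMulIdeal (I : Submodule K A) : Prop :=
  ∀ a : A, ∀ x ∈ I, a * x ∈ I ∧ x * a ∈ I

/-- graded simple: `A·A ≠ 0` and no nontrivial homogeneous ideals. -/
def IsGradedSimple (𝒜 : G → Submodule K A) : Prop :=
  (∃ a b : A, a * b ≠ 0) ∧
    ∀ I : Submodule K A, IsMulIdeal K I → IsHomogSubmodule K 𝒜 I → I = ⊥ ∨ I = ⊤

/-- The multiplication algebra: the subalgebra of `End_K A` generated by left and right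
multiplications. -/
def MultAlg : NonUnitalSubalgebra K (Module.End K A) :=
  NonUnitalAlgebra.adjoin K
    (Set.range (LinearMap.mulLeft K (A := A)) ∪ Set.range (LinearMap.mulRight K (A := A)))

/-- The homogeneous component of degree `h` of `End_K A`: maps sending `𝒜 g` into `𝒜 (h*g)`. -/
def endGrading (𝒜 : G → Submodule K A) (h : G) : Submodule K (Module.End K A) where
  carrier := {φ | ∀ g : G, ∀ x ∈ 𝒜 g, φ x ∈ 𝒜 (h * g)}
  add_mem' := fun hf hg g x hx => (𝒜 _).add_mem (hf g x hx) (hg g x hx)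
  zero_mem' := fun g x hx => (𝒜 _).zero_mem
  smul_mem' := fun c f hf g x hx => (𝒜 _).smul_mem c (hf g x hx)

/-- The centroid of `A`: endomorphisms commuting with all left and right multiplications. -/
def centroid : Submodule K (Module.End K A) where
  carrier := {φ | ∀ a x : A, φ (a * x) = a * φ x ∧ φ (x * a) = φ x * a}
  add_mem' := by
    intro f g hf hg a x
    refine ⟨?_, ?_⟩ <;>
      simp [LinearMap.add_apply, (hf a x).1, (hg a x).1, (hf a x).2, (hg a x).2, mul_add, add_mul]
  zero_mem' := by intro a x; simp
  smul_mem' := by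
    intro c f hf a x
    refine ⟨?_, ?_⟩ <;>
      simp [LinearMap.smul_apply, (hf a x).1, (hf a x).2, mul_smul_comm, smul_mul_assoc]

/-- The graded centroid `Γ(A)`: the sums of homogeneous centroid elements. -/
def gradedCentroid (𝒜 : G → Submodule K A) : Submodule K (Module.End K A) :=
  ⨆ h : G, centroid K ⊓ endGrading K 𝒜 h

/-- graded polynomial identity, variables indexed by `G × ℕ`, the variable `(g, i)` having
degree `g`. -/
def IsGradedPI (𝒜 : G → Submodule K A) (f : FreeNonUnitalNonAssocAlgebra K (G × ℕ)) : Prop :=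
  ∀ v : G × ℕ → A, (∀ p, v p ∈ 𝒜 p.1) → FreeNonUnitalNonAssocAlgebra.lift K v f = 0

/-- ordinary polynomial identity of a not necessarily associative algebra -/
def IsPI (f : FreeNonUnitalNonAssocAlgebra K ℕ) : Prop :=
  ∀ v : ℕ → A, FreeNonUnitalNonAssocAlgebra.lift K v f = 0

/-- A subset `S` of an associative unital `K`-algebra `B` satisfies an ordinary polynomial
identity. -/
def SatisfiesOrdinaryPI {B : Type*} [Ring B] [Algebra K B] (S : Set B) : Prop :=
  ∃ f : FreeAlgebra K ℕ, f ≠ 0 ∧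
    ∀ v : ℕ → B, (∀ i, v i ∈ S) → FreeAlgebra.lift K v f = 0

/-- isomorphism of `G`-graded algebras -/
def IsGradedIso {B : Type*} [NonUnitalNonAssocSemiring B] [Module K B]
    (𝒜 : G → Submodule K A) (ℬ : G → Submodule K B) : Prop :=
  ∃ ψ : A ≃ₗ[K] B, (∀ x y : A, ψ (x * y) = ψ x * ψ y) ∧
    ∀ g : G, (𝒜 g).map (ψ : A →ₗ[K] B) = ℬ g

end

noncomputable section

variable (K : Type*) [Field K]

/-- `f` is an ordinary (associative) polynomial identity of the subset `S` of the associative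
unital algebra `B`. -/
def IsAssocPIOn {B : Type*} [Ring B] [Algebra K B] (S : Set B) (f : FreeAlgebra K ℕ) : Prop :=
  ∀ v : ℕ → B, (∀ i, v i ∈ S) → FreeAlgebra.lift K v f = 0

end

noncomputable section

open TensorProduct

variable (F : Type*) [Field F] {G : Type*} [CommGroup G] [DecidableEq G]
variable {A : Type*} [NonUnitalNonAssocRing A] [Module F A] [SMulCommClass F A A]
  [IsScalarTower F A A]
variable (FF : Type*) [Field FF] [Algebra F FF]

/-- the commutant of `M(Ũ)` in `End_FF(Ũ)`, used to express the center of `M(Ũ)`. -/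
def multCommutant : Submodule FF (Module.End FF (FF ⊗[F] A)) where
  carrier := {f | ∀ m ∈ MultAlg FF (A := FF ⊗[F] A), f * m = m * f}
  add_mem' := by intro f g hf hg m hm; rw [add_mul, mul_add, hf m hm, hg m hm]
  zero_mem' := by intro m hm; rw [zero_mul, mul_zero]
  smul_mem' := by intro c f hf m hm; rw [smul_mul_assoc, mul_smul_comm, hf m hm]

/-- the base-change map `FF ⊗ End_F(A) → End_FF(FF ⊗ A)` -/
def basechangeEnd : (FF ⊗[F] Module.End F A) →ₗ[FF] Module.End FF (FF ⊗[F] A) :=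
  LinearMap.liftBaseChange FF (LinearMap.baseChangeHom F FF A A)

lemma exists_proj {𝒜 : G → Submodule F A} (hgr : DirectSum.IsInternal 𝒜) :
    ∃ p : G → A →ₗ[F] A, (∀ g, ∀ x ∈ 𝒜 g, p g x = x) ∧
      (∀ g g', g ≠ g' → ∀ x ∈ 𝒜 g', p g x = 0) := by
  let e := LinearEquiv.ofBijective (DirectSum.coeLinearMap 𝒜) hgr
  have he : ∀ g (x : 𝒜 g), e.symm (x : A) = DirectSum.lof F G (fun g => 𝒜 g) g x := by
    intro g x
    rw [LinearEquiv.symm_apply_eq]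
    exact (DirectSum.coeLinearMap_lof 𝒜 g x).symm
  refine ⟨fun g => (𝒜 g).subtype ∘ₗ DirectSum.component F G (fun g => 𝒜 g) g ∘ₗ
    e.symm.toLinearMap, ?_, ?_⟩
  · intro g x hx
    have := he g ⟨x, hx⟩
    simp only [LinearMap.comp_apply, LinearEquiv.coe_coe]
    simp only at this
    rw [this, DirectSum.component.lof_self]; rfl
  · intro g g' h x hx
    have := he g' ⟨x, hx⟩
    simp only [LinearMap.comp_apply, LinearEquiv.coe_coe]
    simp only at this
    rw [this, DirectSum.component.of, dif_neg (fun h' => h h'.symm)]; rfl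

lemma mulLeft_mem_multAlg (a : A) : LinearMap.mulLeft F a ∈ MultAlg F (A := A) :=
  NonUnitalAlgebra.subset_adjoin F (Or.inl ⟨a, rfl⟩)

lemma mulRight_mem_multAlg (a : A) : LinearMap.mulRight F a ∈ MultAlg F (A := A) :=
  NonUnitalAlgebra.subset_adjoin F (Or.inr ⟨a, rfl⟩)

lemma multAlg_graded {𝒜 : G → Submodule F A} (hgr : IsAlgGrading F 𝒜) {m : Module.End F A}
    (hm : m ∈ MultAlg F (A := A)) :
    m ∈ ⨆ h, (MultAlg F (A := A)).toSubmodule ⊓ endGrading F 𝒜 h := by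
  have htop : ∀ a : A, a ∈ ⨆ g, 𝒜 g := fun a => by
    rw [hgr.1.submodule_iSup_eq_top]; trivial
  induction hm using NonUnitalAlgebra.adjoin_induction with
  | mem x hx =>
    rcases hx with ⟨a, rfl⟩ | ⟨a, rfl⟩
    · refine Submodule.iSup_induction 𝒜
        (motive := fun a => LinearMap.mulLeft F a ∈
          ⨆ h, (MultAlg F (A := A)).toSubmodule ⊓ endGrading F 𝒜 h) (htop a) ?_ ?_ ?_
      · intro g a ha
        refine Submodule.mem_iSup_of_mem g ⟨mulLeft_mem_multAlg F a, ?_⟩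
        intro k x hx
        exact hgr.2 g k a ha x hx
      · simp
      · intro a b ha hb
        have : LinearMap.mulLeft F (a + b) = LinearMap.mulLeft F a + LinearMap.mulLeft F b := by
          ext; simp [add_mul]
        rw [this]; exact add_mem ha hb
    · refine Submodule.iSup_induction 𝒜
        (motive := fun a => LinearMap.mulRight F a ∈
          ⨆ h, (MultAlg F (A := A)).toSubmodule ⊓ endGrading F 𝒜 h) (htop a) ?_ ?_ ?_
      · intro g a ha
        refine Submodule.mem_iSup_of_mem g ⟨mulRight_mem_multAlg F a, ?_⟩
        intro k x hx
        rw [mul_comm g k]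
        exact hgr.2 k g x hx a ha
      · simp
      · intro a b ha hb
        have : LinearMap.mulRight F (a + b) = LinearMap.mulRight F a + LinearMap.mulRight F b := by
          ext; simp [mul_add]
        rw [this]; exact add_mem ha hb
  | add x y _ _ hx hy => exact add_mem hx hy
  | zero => exact zero_mem _
  | smul r x _ hx => exact Submodule.smul_mem _ _ hx
  | mul x y _ _ hx hy =>
    refine Submodule.iSup_induction _ (motive := fun x => x * y ∈
          ⨆ h, (MultAlg F (A := A)).toSubmodule ⊓ endGrading F 𝒜 h) hx ?_ ?_ ?_
    · intro h x hx
      refine Submodule.iSup_induction _ (motive := fun y => x * y ∈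
          ⨆ h, (MultAlg F (A := A)).toSubmodule ⊓ endGrading F 𝒜 h) hy ?_ ?_ ?_
      · intro k y hy
        refine Submodule.mem_iSup_of_mem (h * k) ⟨(MultAlg F (A := A)).mul_mem' hx.1 hy.1, ?_⟩
        intro g z hz
        rw [mul_assoc]
        exact hx.2 _ _ (hy.2 _ _ hz)
      · simp
      · intro a b ha hb
        rw [mul_add]; exact add_mem ha hb
    · simp
    · intro a b ha hb
      rw [add_mul]; exact add_mem ha hb

/-- homogeneous components of an element of the multiplication algebra -/
lemma multAlg_components {𝒜 : G → Submodule F A} (hgr : IsAlgGrading F 𝒜) {m : Module.End F A}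
    (hm : m ∈ MultAlg F (A := A)) {p : G → A →ₗ[F] A} (hp1 : ∀ g, ∀ x ∈ 𝒜 g, p g x = x)
    (hp2 : ∀ g g', g ≠ g' → ∀ x ∈ 𝒜 g', p g x = 0) :
    ∃ c : G →₀ Module.End F A, (∀ h, c h ∈ MultAlg F (A := A) ∧ c h ∈ endGrading F 𝒜 h) ∧
      m = c.sum (fun _ x => x) ∧ ∀ g, ∀ x ∈ 𝒜 g, ∀ h, c h x = p (h * g) (m x) := by
  obtain ⟨c, hc, hs⟩ := (Submodule.mem_iSup_iff_exists_finsupp _ _).1 (multAlg_graded F hgr hm)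
  refine ⟨c, fun h => ⟨(hc h).1, (hc h).2⟩, hs.symm, ?_⟩
  intro g x hx h
  rw [← hs, Finsupp.sum, LinearMap.sum_apply, map_sum]
  rw [Finset.sum_eq_single h]
  · exact (hp1 _ _ ((hc h).2 g x hx)).symm
  · intro k _ hk
    refine hp2 _ (k * g) (fun h' => hk (mul_right_cancel h').symm) _ ((hc k).2 g x hx)
  · intro hh
    simp [Finsupp.notMem_support_iff.1 hh]

/-- elements of the multiplication algebra commute with the centroid -/
lemma multAlg_comm_centroid {m φ : Module.End F A} (hm : m ∈ MultAlg F (A := A))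
    (hφ : φ ∈ centroid F (A := A)) (x : A) : m (φ x) = φ (m x) := by
  induction hm using NonUnitalAlgebra.adjoin_induction generalizing x with
  | mem y hy =>
    rcases hy with ⟨a, rfl⟩ | ⟨a, rfl⟩
    · exact ((hφ a x).1).symm
    · exact ((hφ a x).2).symm
  | add y z _ _ hy hz => simp [hy, hz]
  | zero => simp
  | smul r y _ hy => simp [hy]
  | mul y z _ _ hy hz => simp [hy, hz]

lemma mem_centroid_of_comm {φ : Module.End F A}
    (h : ∀ m ∈ MultAlg F (A := A), ∀ x, m (φ x) = φ (m x)) : φ ∈ centroid F (A := A) := by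
  intro a x
  exact ⟨(h _ (mulLeft_mem_multAlg F a) x).symm, (h _ (mulRight_mem_multAlg F a) x).symm⟩

/-- degree `h` part of the `Γ`-span of a list of homogeneous elements -/
def gspan (𝒜 : G → Submodule F A) : List (A × G) → G → Submodule F A
  | [], _ => ⊥
  | (u, g) :: L, h =>
    (centroid F (A := A) ⊓ endGrading F 𝒜 (h * g⁻¹)).map (LinearMap.applyₗ u) ⊔ gspan 𝒜 L h

/-- the annihilator of a list -/
def annList (L : List (A × G)) : Submodule F (Module.End F A) where
  carrier := {m | m ∈ MultAlg F (A := A) ∧ ∀ q ∈ L, m q.1 = 0}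
  add_mem' := fun ha hb => ⟨add_mem ha.1 hb.1, fun q hq => by simp [ha.2 q hq, hb.2 q hq]⟩
  zero_mem' := ⟨zero_mem _, fun q hq => by simp⟩
  smul_mem' := fun c a ha =>
    ⟨SMulMemClass.smul_mem c ha.1, fun q hq => by simp [ha.2 q hq]⟩

lemma ann_dichotomy {𝒜 : G → Submodule F A} (hgr : IsAlgGrading F 𝒜) (hsimp : IsGradedSimple F 𝒜)
    (L : List (A × G)) (hL : ∀ q ∈ L, q.1 ∈ 𝒜 q.2) {x : A} {h : G} (hx : x ∈ 𝒜 h) :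
    (∀ m ∈ annList F L, m x = 0) ∨ ∀ a : A, ∃ m ∈ annList F L, m x = a := by
  obtain ⟨p, hp1, hp2⟩ := exists_proj F hgr.1
  have key := hsimp.2 ((annList F L).map (LinearMap.applyₗ x)) ?_ ?_
  · rcases key with key | key
    · left
      intro m hm
      have : m x ∈ (annList F L).map (LinearMap.applyₗ x) := ⟨m, hm, rfl⟩
      rw [key] at this
      simpa using this
    · right
      intro a
      have : a ∈ (annList F L).map (LinearMap.applyₗ x) := by rw [key]; trivial
      obtain ⟨m, hm, h⟩ := this
      exact ⟨m, hm, h⟩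
  · rintro a _ ⟨m, hm, rfl⟩
    refine ⟨⟨LinearMap.mulLeft F a * m, ⟨mul_mem (mulLeft_mem_multAlg F a) hm.1, ?_⟩, rfl⟩,
      ⟨LinearMap.mulRight F a * m, ⟨mul_mem (mulRight_mem_multAlg F a) hm.1, ?_⟩, rfl⟩⟩
    · intro q hq; simp [hm.2 q hq]
    · intro q hq; simp [hm.2 q hq]
  · apply le_antisymm
    · rintro _ ⟨m, hm, rfl⟩
      obtain ⟨c, hc, hs, hcx⟩ := multAlg_components F hgr hm.1 hp1 hp2
      have hcL : ∀ k, c k ∈ annList F L := by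
        intro k
        refine ⟨(hc k).1, fun q hq => ?_⟩
        rw [hcx _ _ (hL q hq), hm.2 q hq, map_zero]
      have : LinearMap.applyₗ x m = ∑ k ∈ c.support, c k x := by
        conv_lhs => rw [hs]
        simp [Finsupp.sum]
      rw [this]
      refine sum_mem fun k _ => Submodule.mem_iSup_of_mem (k * h) ⟨⟨c k, hcL k, rfl⟩, ?_⟩
      exact (hc k).2 h x hx
    · exact iSup_le fun g => inf_le_left

lemma eq_zero_of_multAlg {𝒜 : G → Submodule F A} (hgr : IsAlgGrading F 𝒜)
    (hsimp : IsGradedSimple F 𝒜) {x : A} {h : G} (hx : x ∈ 𝒜 h)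
    (h0 : ∀ m ∈ MultAlg F (A := A), m x = 0) : x = 0 := by
  obtain ⟨p, hp1, hp2⟩ := exists_proj F hgr.1
  let I : Submodule F A := F ∙ x
  have hz : ∀ y ∈ I, ∀ m ∈ MultAlg F (A := A), m y = 0 := by
    intro y hy m hm
    obtain ⟨c, rfl⟩ := Submodule.mem_span_singleton.1 hy
    rw [map_smul, h0 m hm, smul_zero]
  have key := hsimp.2 I ?_ ?_
  · rcases key with key | key
    · have : x ∈ I := Submodule.mem_span_singleton_self x
      rw [key] at this; simpa using this
    · exfalso
      obtain ⟨a, b, hab⟩ := hsimp.1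
      exact hab (hz b (by rw [key]; trivial) _ (mulLeft_mem_multAlg F a))
  · intro a y hy
    have h1 : a * y = 0 := hz y hy _ (mulLeft_mem_multAlg F a)
    have h2 : y * a = 0 := hz y hy _ (mulRight_mem_multAlg F a)
    rw [h1, h2]; exact ⟨zero_mem _, zero_mem _⟩
  · apply le_antisymm
    · have : I ≤ I ⊓ 𝒜 h := le_inf le_rfl (by
        rw [Submodule.span_singleton_le_iff_mem]; exact hx)
      exact this.trans (le_iSup (fun g => I ⊓ 𝒜 g) h)
    · exact iSup_le fun g => inf_le_left

/-- graded density -/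
lemma graded_density {𝒜 : G → Submodule F A} (hgr : IsAlgGrading F 𝒜)
    (hsimp : IsGradedSimple F 𝒜) (L : List (A × G)) (hL : ∀ q ∈ L, q.1 ∈ 𝒜 q.2) :
    ∀ {x : A} {h : G}, x ∈ 𝒜 h → (∀ m ∈ annList F L, m x = 0) → x ∈ gspan F 𝒜 L h := by
  induction L with
  | nil =>
    intro x h hx h0
    have : x = 0 := eq_zero_of_multAlg F hgr hsimp hx fun m hm => h0 m ⟨hm, by simp⟩
    rw [this]; exact zero_mem _
  | cons q L ih =>
    obtain ⟨u, g⟩ := q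
    intro x h hx h0
    have hL' : ∀ q ∈ L, q.1 ∈ 𝒜 q.2 := fun q hq => hL q (List.mem_cons_of_mem _ hq)
    have hu : u ∈ 𝒜 g := hL (u, g) (List.mem_cons_self)
    have hmem : ∀ m ∈ annList F L, m u = 0 → m ∈ annList F ((u, g) :: L) := by
      intro m hm hmu
      refine ⟨hm.1, fun q hq => ?_⟩
      rcases List.mem_cons.1 hq with rfl | hq
      · exact hmu
      · exact hm.2 q hq
    rcases ann_dichotomy F hgr hsimp L hL' hu with hd | hd
    · exact Submodule.mem_sup_right (ih hL' hx fun m hm => h0 m (hmem m hm (hd m hm)))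
    · choose s hs hsu using hd
      have huniq : ∀ m ∈ annList F L, s (m u) x = m x := by
        intro m hm
        have := h0 (s (m u) - m) (hmem _ (sub_mem (hs _) hm) (by simp [hsu]))
        rw [LinearMap.sub_apply] at this
        exact sub_eq_zero.1 this
      let φ : Module.End F A :=
        { toFun := fun a => s a x
          map_add' := by
            intro a b
            have := huniq (s a + s b) (add_mem (hs a) (hs b))
            simpa [hsu] using this
          map_smul' := by
            intro c a
            have := huniq (c • s a) (Submodule.smul_mem _ c (hs a))
            simpa [hsu] using this }
      have hφ : ∀ m ∈ annList F L, φ (m u) = m x := huniq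
      have hφc : φ ∈ centroid F (A := A) := by
        apply mem_centroid_of_comm
        intro m hm a
        have h1 : m * s a ∈ annList F L :=
          ⟨mul_mem hm (hs a).1, fun q hq => by simp [(hs a).2 q hq]⟩
        have h2 := hφ _ h1
        simp only [Module.End.mul_apply, hsu] at h2
        rw [h2]; rfl
      have hφd : φ ∈ endGrading F 𝒜 (h * g⁻¹) := by
        intro k a ha
        obtain ⟨p, hp1, hp2⟩ := exists_proj F hgr.1
        obtain ⟨c, hc, hcs, hcx⟩ := multAlg_components F hgr (hs a).1 hp1 hp2
        have hcL : c (k * g⁻¹) ∈ annList F L := by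
          refine ⟨(hc _).1, fun q hq => ?_⟩
          rw [hcx _ _ (hL' q hq), (hs a).2 q hq, map_zero]
        have h1 : c (k * g⁻¹) u = a := by
          rw [hcx g u hu, hsu, inv_mul_cancel_right, hp1 k a ha]
        have h2 := hφ _ hcL
        rw [h1] at h2
        rw [h2]
        have := (hc (k * g⁻¹)).2 h x hx
        rwa [show k * g⁻¹ * h = h * g⁻¹ * k by
          rw [mul_comm k, mul_assoc, mul_comm k, ← mul_assoc, mul_comm g⁻¹ h]] at this
      have hφu : φ u ∈ 𝒜 h := by
        have := hφd g u hu
        rwa [inv_mul_cancel_right] at this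
      have h3 : x - φ u ∈ gspan F 𝒜 L h := by
        refine ih hL' (sub_mem hx hφu) fun m hm => ?_
        rw [map_sub, multAlg_comm_centroid F hm.1 hφc, hφ m hm, sub_self]
      have h4 : φ u ∈ (centroid F (A := A) ⊓ endGrading F 𝒜 (h * g⁻¹)).map
        (LinearMap.applyₗ u) := ⟨φ, ⟨hφc, hφd⟩, rfl⟩
      have : x = φ u + (x - φ u) := by abel
      rw [this]
      exact Submodule.add_mem_sup h4 h3

lemma freeAlgebra_lift_eq {K : Type*} [Field K] {B : Type*} [Ring B] [Algebra K B] (v : ℕ → B)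
    (f : FreeAlgebra K ℕ) :
    FreeAlgebra.lift K v f = ((FreeAlgebra.equivMonoidAlgebraFreeMonoid f).coeff).sum
      (fun w c => c • (List.map v w.toList).prod) := by
  have h : FreeAlgebra.lift K v = (MonoidAlgebra.lift K B (FreeMonoid ℕ)
      (FreeMonoid.lift v)).comp FreeAlgebra.equivMonoidAlgebraFreeMonoid.toAlgHom := by
    ext x
    simp [FreeAlgebra.equivMonoidAlgebraFreeMonoid]
  rw [h]
  simp only [AlgHom.comp_apply]
  rw [MonoidAlgebra.lift_apply]
  simp only [FreeMonoid.lift_apply]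
  rfl

lemma freeAlgebra_exists_coeff {K : Type*} [Field K] {f : FreeAlgebra K ℕ} (hf : f ≠ 0) :
    ∃ w, (FreeAlgebra.equivMonoidAlgebraFreeMonoid f).coeff w ≠ 0 := by
  by_contra! h
  apply hf
  apply FreeAlgebra.equivMonoidAlgebraFreeMonoid.injective
  rw [map_zero]
  ext w
  simpa using h w

/-- triangular independence over the graded centroid -/
def GIndep (𝒜 : G → Submodule F A) : List (A × G) → Prop
  | [] => True
  | (u, g) :: L => u ∈ 𝒜 g ∧ u ∉ gspan F 𝒜 L g ∧ GIndep 𝒜 L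

lemma GIndep.homog {𝒜 : G → Submodule F A} {L : List (A × G)} (hL : GIndep F 𝒜 L) :
    ∀ q ∈ L, q.1 ∈ 𝒜 q.2 := by
  induction L with
  | nil => simp
  | cons q L ih =>
    obtain ⟨u, g⟩ := q
    intro q hq
    rcases List.mem_cons.1 hq with rfl | hq
    · exact hL.1
    · exact ih hL.2.2 q hq

lemma GIndep.ne_zero {𝒜 : G → Submodule F A} {L : List (A × G)} (hL : GIndep F 𝒜 L) :
    ∀ q ∈ L, q.1 ≠ 0 := by
  induction L with
  | nil => simp
  | cons q L ih =>
    obtain ⟨u, g⟩ := q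
    intro q hq
    rcases List.mem_cons.1 hq with rfl | hq
    · rintro (rfl : u = 0)
      exact hL.2.1 (zero_mem _)
    · exact ih hL.2.2 q hq

lemma GIndep.interp {𝒜 : G → Submodule F A} (hgr : IsAlgGrading F 𝒜)
    (hsimp : IsGradedSimple F 𝒜) {L : List (A × G)} (hL : GIndep F 𝒜 L) :
    ∀ t : ℕ → A, ∃ m ∈ MultAlg F (A := A), ∀ i (hi : i < L.length), m (L[i]).1 = t i := by
  induction L with
  | nil => exact fun t => ⟨0, zero_mem _, by simp⟩
  | cons q L ih =>
    obtain ⟨u, g⟩ := q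
    intro t
    obtain ⟨m, hm, hmt⟩ := ih hL.2.2 (fun i => t (i + 1))
    rcases ann_dichotomy F hgr hsimp L (GIndep.homog F hL.2.2) hL.1 with hd | hd
    · exact absurd (graded_density F hgr hsimp L (GIndep.homog F hL.2.2) hL.1 hd) hL.2.1
    · obtain ⟨n, hn, hnu⟩ := hd (t 0 - m u)
      refine ⟨m + n, add_mem hm hn.1, ?_⟩
      rintro (_ | i) hi
      · simp [hnu]
      · have h1 : i < L.length := by simpa using hi
        have h2 := hn.2 L[i] (List.getElem_mem h1)
        simp [h2, hmt i h1]

lemma suffix_cons_iff {a : ℕ} {v w : List ℕ} :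
    (a :: v) <:+ w ↔ v <:+ w ∧ w.reverse[v.length]? = some a := by
  rw [← List.reverse_prefix, ← List.reverse_prefix, List.reverse_cons]
  generalize w.reverse = w'
  constructor
  · rintro ⟨t, rfl⟩
    refine ⟨⟨[a] ++ t, by simp⟩, ?_⟩
    rw [List.append_assoc, List.getElem?_append_right (by simp)]
    simp
  · rintro ⟨⟨t, rfl⟩, h⟩
    rw [List.getElem?_append_right (by simp)] at h
    cases t with
    | nil => simp at h
    | cons b t =>
      simp at h
      subst h
      exact ⟨t, by simp⟩

/-- independent lists have bounded length -/
lemma GIndep.bounded {𝒜 : G → Submodule F A} (hgr : IsAlgGrading F 𝒜)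
    (hsimp : IsGradedSimple F 𝒜)
    (hPI : SatisfiesOrdinaryPI F (MultAlg F (A := A) : Set (Module.End F A))) :
    ∃ d : ℕ, ∀ L : List (A × G), GIndep F 𝒜 L → L.length ≠ d + 1 := by
  obtain ⟨f, hf0, hf⟩ := hPI
  obtain ⟨w, hw⟩ := freeAlgebra_exists_coeff hf0
  set a := (FreeAlgebra.equivMonoidAlgebraFreeMonoid f).coeff with ha
  refine ⟨w.toList.length, fun L hL hlen => ?_⟩
  let u : ℕ → A := fun i => if hi : i < L.length then (L[i]).1 else 0
  have hu : ∀ t : ℕ → A, ∃ m ∈ MultAlg F (A := A), ∀ i < L.length, m (u i) = t i := by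
    intro t
    obtain ⟨m, hm, h⟩ := GIndep.interp F hgr hsimp hL t
    refine ⟨m, hm, fun i hi => ?_⟩
    simp only [u, dif_pos hi]
    exact h i hi
  choose X hXM hX using fun i : ℕ => hu (fun j => if w.toList.reverse[j]? = some i then u (j + 1) else 0)
  have hword : ∀ v : List ℕ, (List.map X v).prod (u 0) =
      if v <:+ w.toList then u v.length else 0 := by
    intro v
    induction v with
    | nil => simp
    | cons b v ih =>
      rw [List.map_cons, List.prod_cons, Module.End.mul_apply, ih]
      by_cases h1 : v <:+ w.toList
      · rw [if_pos h1, hX b _ (by have := h1.length_le; omega)]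
        simp only [suffix_cons_iff, h1, true_and, List.length_cons]
      · rw [if_neg h1, map_zero, if_neg]
        rw [suffix_cons_iff]; exact fun h => h1 h.1
  have h0 := hf X hXM
  rw [freeAlgebra_lift_eq] at h0
  obtain ⟨m, hm, hmu⟩ := hu (fun j => if j = w.toList.length then u j else 0)
  have h1 := congrArg (fun φ : Module.End F A => m (φ (u 0))) h0
  simp only [Finsupp.sum, LinearMap.sum_apply, LinearMap.smul_apply, LinearMap.zero_apply,
    map_sum, map_smul, map_zero, hword] at h1
  rw [Finset.sum_eq_single w] at h1
  · rw [if_pos (List.suffix_refl _), hmu _ (by omega), if_pos rfl] at h1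
    rcases smul_eq_zero.1 h1 with h | h
    · exact hw h
    · have hl : w.toList.length < L.length := by omega
      simp only [u, dif_pos hl] at h
      exact GIndep.ne_zero F hL _ (List.getElem_mem hl) h
  · intro v _ hv
    by_cases hs : v.toList <:+ w.toList
    · rw [if_pos hs, hmu _ (by have := hs.length_le; omega), if_neg, smul_zero]
      intro hl
      exact hv (FreeMonoid.toList.injective (hs.eq_of_length hl))
    · rw [if_neg hs, map_zero, smul_zero]
  · intro h
    exact absurd (Finsupp.notMem_support_iff.1 h) hw

lemma gspan_fixed {𝒜 : G → Submodule F A} {m : Module.End F A} (hm : m ∈ MultAlg F (A := A))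
    (L : List (A × G)) (hL : ∀ q ∈ L, m q.1 = q.1) (h : G) : ∀ x ∈ gspan F 𝒜 L h, m x = x := by
  induction L with
  | nil =>
    intro x hx
    have : x = 0 := by simpa [gspan] using hx
    simp [this]
  | cons q L ih =>
    obtain ⟨u, g⟩ := q
    intro x hx
    obtain ⟨y, hy, z, hz, rfl⟩ := Submodule.mem_sup.1 hx
    obtain ⟨φ, hφ, rfl⟩ := hy
    rw [map_add, ih (fun q hq => hL q (List.mem_cons_of_mem _ hq)) z hz]
    congr 1
    change m (φ u) = φ u
    rw [multAlg_comm_centroid F hm hφ.1, hL (u, g) List.mem_cons_self]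

lemma one_mem_multAlg {𝒜 : G → Submodule F A} (hgr : IsAlgGrading F 𝒜)
    (hsimp : IsGradedSimple F 𝒜)
    (hPI : SatisfiesOrdinaryPI F (MultAlg F (A := A) : Set (Module.End F A))) :
    (1 : Module.End F A) ∈ MultAlg F (A := A) := by
  obtain ⟨d, hd⟩ := GIndep.bounded F hgr hsimp hPI
  have : ∃ L : List (A × G), GIndep F 𝒜 L ∧ ∀ h, ∀ x ∈ 𝒜 h, x ∈ gspan F 𝒜 L h := by
    by_contra! hcon
    have : ∀ n, ∃ L : List (A × G), GIndep F 𝒜 L ∧ L.length = n := by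
      intro n
      induction n with
      | zero => exact ⟨[], trivial, rfl⟩
      | succ n ih =>
        obtain ⟨L, hL, hn⟩ := ih
        obtain ⟨h, x, hx, hxL⟩ := hcon L hL
        exact ⟨(x, h) :: L, ⟨hx, hxL, hL⟩, by simp [hn]⟩
    obtain ⟨L, hL, hn⟩ := this (d + 1)
    exact hd L hL hn
  obtain ⟨L, hL, hspan⟩ := this
  obtain ⟨m, hm, hmL⟩ := GIndep.interp F hgr hsimp hL
    (fun i => if hi : i < L.length then (L[i]).1 else 0)
  have hfix : ∀ q ∈ L, m q.1 = q.1 := by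
    intro q hq
    obtain ⟨i, hi, rfl⟩ := List.getElem_of_mem hq
    rw [hmL i hi, dif_pos hi]
  have : m = 1 := by
    ext x
    have hx : x ∈ ⨆ g, 𝒜 g := by rw [hgr.1.submodule_iSup_eq_top]; trivial
    refine Submodule.iSup_induction 𝒜 (motive := fun x => m x = (1 : Module.End F A) x) hx
      ?_ ?_ ?_
    · intro g y hy
      exact gspan_fixed F hm L hfix g y (hspan g y hy)
    · simp
    · intro y z hy hz
      rw [map_add, map_add, hy, hz]
  exact this ▸ hm

lemma centroid_mul_mem {φ m : Module.End F A} (hφ : φ ∈ centroid F (A := A))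
    (hm : m ∈ MultAlg F (A := A)) : φ * m ∈ MultAlg F (A := A) := by
  induction hm using NonUnitalAlgebra.adjoin_induction with
  | mem x hx =>
    rcases hx with ⟨a, rfl⟩ | ⟨a, rfl⟩
    · have : φ * LinearMap.mulLeft F a = LinearMap.mulLeft F (φ a) := by
        ext x; exact (hφ x a).2
      rw [this]; exact mulLeft_mem_multAlg F _
    · have : φ * LinearMap.mulRight F a = LinearMap.mulRight F (φ a) := by
        ext x; exact (hφ x a).1
      rw [this]; exact mulRight_mem_multAlg F _
  | add y z _ _ hy hz => rw [mul_add]; exact add_mem hy hz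
  | zero => rw [mul_zero]; exact zero_mem _
  | smul r y _ hy => rw [mul_smul_comm]; exact SMulMemClass.smul_mem r hy
  | mul y z _ hz' hy hz => rw [← mul_assoc]; exact mul_mem hy hz'

lemma centroid_le_multAlg {𝒜 : G → Submodule F A} (hgr : IsAlgGrading F 𝒜)
    (hsimp : IsGradedSimple F 𝒜)
    (hPI : SatisfiesOrdinaryPI F (MultAlg F (A := A) : Set (Module.End F A)))
    {φ : Module.End F A} (hφ : φ ∈ centroid F (A := A)) : φ ∈ MultAlg F (A := A) := by
  have := centroid_mul_mem F hφ (one_mem_multAlg F hgr hsimp hPI)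
  rwa [mul_one] at this

/-- a centroid element of the multiplication algebra is in the graded centroid -/
lemma mem_gradedCentroid {𝒜 : G → Submodule F A} (hgr : IsAlgGrading F 𝒜)
    {φ : Module.End F A} (hφ : φ ∈ centroid F (A := A)) (hm : φ ∈ MultAlg F (A := A)) :
    φ ∈ gradedCentroid F 𝒜 := by
  obtain ⟨p, hp1, hp2⟩ := exists_proj F hgr.1
  obtain ⟨c, hc, hs, hcx⟩ := multAlg_components F hgr hm hp1 hp2
  rw [hs]
  refine sum_mem fun h _ => Submodule.mem_iSup_of_mem h ⟨?_, (hc h).2⟩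
  have htop : ∀ a : A, a ∈ ⨆ g, 𝒜 g := fun a => by
    rw [hgr.1.submodule_iSup_eq_top]; trivial
  have hsx : ∀ x, φ x = ∑ k ∈ c.support, c k x := by
    intro x
    conv_lhs => rw [hs]
    simp [Finsupp.sum]
  have key : ∀ (ψ : Module.End F A) (g : G), ψ ∈ endGrading F 𝒜 g → (∀ x, φ (ψ x) = ψ (φ x)) →
      ∀ x, c h (ψ x) = ψ (c h x) := by
    intro ψ g hψ hcomm x
    refine Submodule.iSup_induction 𝒜 (motive := fun x => c h (ψ x) = ψ (c h x)) (htop x)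
      ?_ ?_ ?_
    · intro k x hx
      rw [hcx _ _ (hψ k x hx), hcomm, hsx, map_sum, map_sum, Finset.sum_eq_single h]
      · apply hp1
        rw [mul_left_comm]
        exact hψ _ _ ((hc h).2 k x hx)
      · intro b _ hb
        apply hp2 _ (g * (b * k)) _ _ (hψ _ _ ((hc b).2 k x hx))
        rw [mul_left_comm]
        intro h'
        exact hb (mul_right_cancel (mul_left_cancel h')).symm
      · intro hh
        simp [Finsupp.notMem_support_iff.1 hh]
    · simp
    · intro x y hx hy; simp [hx, hy]
  intro a x
  refine Submodule.iSup_induction 𝒜 (motive := fun a => c h (a * x) = a * c h x ∧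
    c h (x * a) = c h x * a) (htop a) ?_ ?_ ?_
  · intro g a ha
    constructor
    · exact key (LinearMap.mulLeft F a) g (fun k y hy => hgr.2 g k a ha y hy)
        (fun y => (hφ a y).1) x
    · exact key (LinearMap.mulRight F a) g
        (fun k y hy => by rw [mul_comm g k]; exact hgr.2 k g y hy a ha) (fun y => (hφ a y).2) x
  · simp
  · intro a b ha hb
    simp [add_mul, mul_add, ha.1, ha.2, hb.1, hb.2]

lemma sum_neg_one_supersets {d : ℕ} (R : Finset (Fin d)) :
    (∑ T : Finset (Fin d), if R ⊆ T then (-1 : ℤ) ^ T.card else 0) =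
      if R = Finset.univ then (-1) ^ d else 0 := by
  by_cases hR : R = Finset.univ
  · subst hR
    rw [if_pos rfl, Finset.sum_eq_single Finset.univ]
    · simp
    · intro T _ hT
      rw [if_neg]
      intro h
      exact hT (Finset.univ_subset_iff.1 h)
    · simp
  · rw [if_neg hR]
    obtain ⟨k, hk⟩ : ∃ k, k ∉ R := by
      by_contra! h
      exact hR (Finset.eq_univ_iff_forall.2 h)
    refine Finset.sum_involution (fun T _ => if k ∈ T then T.erase k else insert k T) ?_ ?_ ?_ ?_
    · intro T _
      by_cases hkT : k ∈ T
      · simp only [hkT, if_true]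
        have h1 : (R ⊆ T.erase k) ↔ R ⊆ T := by
          rw [Finset.subset_erase]; simp [hk]
        simp only [h1]
        split_ifs
        · rw [← Finset.card_erase_add_one hkT, pow_succ]; ring
        · rfl
      · simp only [hkT, if_false]
        have h1 : (R ⊆ insert k T) ↔ R ⊆ T := by
          rw [Finset.subset_insert_iff_of_notMem hk]
        simp only [h1]
        split_ifs
        · rw [Finset.card_insert_of_notMem hkT, pow_succ]; ring
        · rfl
    · intro T _ _ h
      by_cases hkT : k ∈ T
      · simp only [hkT, if_true] at h
        rw [← h] at hkT; simp at hkT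
      · simp only [hkT, if_false] at h
        apply hkT; rw [← h]; simp
    · intros; simp
    · intro T _
      by_cases hkT : k ∈ T
      · simp [hkT, Finset.insert_erase]
      · simp [hkT, Finset.erase_insert]

lemma word_polarize {B : Type*} [Ring B] {d : ℕ} (W : Fin d → ℕ) (y : Fin d → B)
    {l : ℕ} (hl : l ≤ d) (V : Fin l → ℕ) :
    (∑ T : Finset (Fin d), (-1 : ℤ) ^ T.card •
      (List.map (fun i => ∑ k ∈ T with W k = i, y k) (List.ofFn V)).prod) =
    (-1 : ℤ) ^ d • ∑ σ : Equiv.Perm (Fin d),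
      if List.ofFn V = List.ofFn (fun j => W (σ j)) then (List.ofFn fun j => y (σ j)).prod
      else 0 := by
  have h1 : ∀ T : Finset (Fin d),
      (List.map (fun i => ∑ k ∈ T with W k = i, y k) (List.ofFn V)).prod =
      ∑ r : Fin l → Fin d, if (∀ j, W (r j) = V j) ∧ Finset.univ.image r ⊆ T then
        (List.ofFn fun j => y (r j)).prod else 0 := by
    intro T
    have h2 := (MultilinearMap.mkPiAlgebraFin ℤ l B).map_sum_finset
      (fun _ k => y k) (fun j => T.filter (fun k => W k = V j))
    simp only [MultilinearMap.mkPiAlgebraFin_apply] at h2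
    rw [List.map_ofFn]
    refine Eq.trans h2 ?_
    rw [← Finset.sum_filter]
    refine Finset.sum_congr ?_ fun _ _ => rfl
    ext r
    simp only [Fintype.mem_piFinset, Finset.mem_filter, Finset.mem_univ, true_and,
      Finset.image_subset_iff, forall_const]
    constructor
    · exact fun h => ⟨fun j => (h j).2, fun j => (h j).1⟩
    · exact fun h j => ⟨h.2 j, h.1 j⟩
  simp only [h1, Finset.smul_sum]
  rw [Finset.sum_comm]
  have h3 : ∀ r : Fin l → Fin d, (∑ T : Finset (Fin d), (-1 : ℤ) ^ T.card •
      (if (∀ j, W (r j) = V j) ∧ Finset.univ.image r ⊆ T then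
        (List.ofFn fun j => y (r j)).prod else 0)) =
      if (∀ j, W (r j) = V j) ∧ Finset.univ.image r = Finset.univ then
        (-1 : ℤ) ^ d • (List.ofFn fun j => y (r j)).prod else 0 := by
    intro r
    by_cases hr : ∀ j, W (r j) = V j
    · simp only [hr, implies_true, true_and]
      have := congrArg (fun z : ℤ => z • (List.ofFn fun j => y (r j)).prod)
        (sum_neg_one_supersets (Finset.univ.image r))
      simp only [Finset.sum_smul, ite_smul, zero_smul] at this
      rw [← this]
      refine Finset.sum_congr rfl fun T _ => ?_
      split_ifs <;> simp
    · simp [hr]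
  simp only [h3]
  rcases hl.lt_or_eq with hlt | rfl
  · rw [Finset.sum_eq_zero, Finset.sum_eq_zero]
    · intro σ _
      rw [if_neg, smul_zero]
      intro h
      have := congrArg List.length h
      simp at this
      omega
    · intro r _
      rw [if_neg]
      rintro ⟨_, h⟩
      have h4 := Finset.card_image_le (s := Finset.univ) (f := r)
      rw [h] at h4
      simp at h4
      omega
  · symm
    refine Finset.sum_of_injOn (fun σ : Equiv.Perm (Fin l) => (σ : Fin l → Fin l)) ?_ ?_ ?_ ?_
    · intro a _ b _ h
      exact DFunLike.coe_injective h
    · intro a _; simp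
    · intro r _ hr
      rw [if_neg]
      rintro ⟨_, h⟩
      apply hr
      have hs : Function.Surjective r := by
        intro k
        have : k ∈ Finset.univ.image r := by rw [h]; simp
        simpa using this
      exact ⟨Equiv.ofBijective r (Finite.surjective_iff_bijective.1 hs), by simp, rfl⟩
    · intro σ _
      have h5 : Finset.univ.image (σ : Fin l → Fin l) = Finset.univ :=
        Finset.image_univ_of_surjective σ.surjective
      simp only [h5, and_true, smul_ite, smul_zero, List.ofFn_inj]
      refine if_congr ?_ rfl rfl
      rw [funext_iff]
      exact forall_congr' fun j => eq_comm

lemma multilinearize {K : Type*} [Field K] {B : Type*} [Ring B] [Algebra K B]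
    (S : Submodule K B) (hPI : SatisfiesOrdinaryPI K (S : Set B)) :
    ∃ (d : ℕ) (a : Equiv.Perm (Fin d) → K), a 1 ≠ 0 ∧ ∀ y : Fin d → B, (∀ k, y k ∈ S) →
      ∑ σ, a σ • (List.ofFn fun j => y (σ j)).prod = 0 := by
  obtain ⟨f, hf0, hf⟩ := hPI
  set a := (FreeAlgebra.equivMonoidAlgebraFreeMonoid f).coeff with ha
  obtain ⟨w, hw, hmax⟩ := Finset.exists_max_image a.support (fun v => v.toList.length) (by
    obtain ⟨w, hw⟩ := freeAlgebra_exists_coeff hf0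
    exact ⟨w, Finsupp.mem_support_iff.2 hw⟩)
  let d := w.toList.length
  let W : Fin d → ℕ := w.toList.get
  refine ⟨d, fun σ => a (FreeMonoid.ofList (List.ofFn fun j => W (σ j))), ?_, ?_⟩
  · have : (List.ofFn fun j => W ((1 : Equiv.Perm (Fin d)) j)) = w.toList := List.ofFn_get _
    simp only [this]
    exact Finsupp.mem_support_iff.1 hw
  · intro y hy
    have h0 : ∀ T : Finset (Fin d), FreeAlgebra.lift K
        (fun i => ∑ k ∈ T with W k = i, y k) f = 0 :=
      fun T => hf _ fun i => sum_mem fun k _ => hy k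
    have h1 : ∑ T : Finset (Fin d), (-1 : ℤ) ^ T.card • FreeAlgebra.lift K
        (fun i => ∑ k ∈ T with W k = i, y k) f = 0 := by
      simp [h0]
    simp only [freeAlgebra_lift_eq, ← ha, Finsupp.sum, Finset.smul_sum] at h1
    rw [Finset.sum_comm] at h1
    have h2 : ∀ v ∈ a.support, (∑ T : Finset (Fin d), (-1 : ℤ) ^ T.card • a v •
        (List.map (fun i => ∑ k ∈ T with W k = i, y k) v.toList).prod) =
        (-1 : ℤ) ^ d • ∑ σ : Equiv.Perm (Fin d),
          if v.toList = List.ofFn (fun j => W (σ j)) then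
            a v • (List.ofFn fun j => y (σ j)).prod else 0 := by
      intro v hv
      have h3 := word_polarize W y (hmax v hv) v.toList.get
      rw [List.ofFn_get] at h3
      have h4 := congrArg (fun b => a v • b) h3
      simp only [Finset.smul_sum, smul_comm (a v), smul_ite, smul_zero] at h4
      rw [h4, Finset.smul_sum]
      simp only [smul_ite, smul_zero]
    rw [Finset.sum_congr rfl h2, ← Finset.smul_sum, Finset.sum_comm] at h1
    have h5 : ((-1 : ℤ) ^ d) * (-1) ^ d = 1 := by rw [← mul_pow]; simp
    have h6 := congrArg (fun b => (-1 : ℤ) ^ d • b) h1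
    simp only [smul_smul, h5, one_smul, smul_zero] at h6
    rw [← h6]
    refine Finset.sum_congr rfl fun σ _ => ?_
    rw [Finset.sum_eq_single (FreeMonoid.ofList (List.ofFn fun j => W (σ j)))]
    · rw [if_pos (FreeMonoid.toList_ofList _)]
    · intro v _ hv
      rw [if_neg]
      intro h8
      exact hv (by rw [← h8, FreeMonoid.ofList_toList])
    · intro h7
      rw [Finsupp.notMem_support_iff.1 h7, zero_smul, ite_self]

lemma multilinear_zero_of_span {K : Type*} [Field K] {B : Type*} [Ring B] [Algebra K B] {d : ℕ}
    (Φ : MultilinearMap K (fun _ : Fin d => B) B) (S : Set B)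
    (h : ∀ y : Fin d → B, (∀ k, y k ∈ S) → Φ y = 0) (y : Fin d → B)
    (hy : ∀ k, y k ∈ Submodule.span K S) : Φ y = 0 := by
  have key : ∀ (T : Finset (Fin d)) (y : Fin d → B), (∀ k ∈ T, y k ∈ Submodule.span K S) →
      (∀ k ∉ T, y k ∈ S) → Φ y = 0 := by
    intro T
    induction T using Finset.induction_on with
    | empty => exact fun y _ hy => h y fun k => hy k (by simp)
    | insert i T hi ih =>
      intro y hy1 hy2
      have h1 : ∀ b ∈ Submodule.span K S, Φ (Function.update y i b) = 0 := by
        intro b hb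
        induction hb using Submodule.span_induction with
        | mem b hb =>
          apply ih
          · intro k hk
            have : k ≠ i := fun h => hi (h ▸ hk)
            rw [Function.update_of_ne this]
            exact hy1 k (Finset.mem_insert_of_mem hk)
          · intro k hk
            by_cases hki : k = i
            · subst hki; simpa using hb
            · rw [Function.update_of_ne hki]
              exact hy2 k (by simp [hki, hk])
        | zero => exact Φ.map_coord_zero i (by simp)
        | add b c _ _ hb hc => rw [Φ.map_update_add, hb, hc, add_zero]
        | smul r b _ hb => rw [Φ.map_update_smul, hb, smul_zero]
      have := h1 (y i) (hy1 i (by simp))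
      rwa [Function.update_eq_self] at this
  exact key Finset.univ y (fun k _ => hy k) (fun k hk => absurd (Finset.mem_univ k) hk)

lemma of_list_prod {K : Type*} [Field K] (l : List ℕ) :
    FreeAlgebra.equivMonoidAlgebraFreeMonoid (List.map (FreeAlgebra.ι K) l).prod =
      MonoidAlgebra.of K (FreeMonoid ℕ) (FreeMonoid.ofList l) := by
  induction l with
  | nil => rw [List.map_nil, List.prod_nil, map_one, FreeMonoid.ofList_nil, map_one]
  | cons a l ih =>
    rw [List.map_cons, List.prod_cons, map_mul, ih, FreeMonoid.ofList_cons, map_mul]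
    simp [FreeAlgebra.equivMonoidAlgebraFreeMonoid]

lemma satisfiesPI_of_multilinear {K : Type*} [Field K] {B : Type*} [Ring B] [Algebra K B]
    (S : Set B) {d : ℕ} (a : Equiv.Perm (Fin d) → K) (ha : a 1 ≠ 0)
    (h : ∀ y : Fin d → B, (∀ k, y k ∈ S) → ∑ σ, a σ • (List.ofFn fun j => y (σ j)).prod = 0) :
    SatisfiesOrdinaryPI K (Submodule.span K S : Set B) := by
  refine ⟨∑ σ, a σ • (List.map (FreeAlgebra.ι K) (List.ofFn fun j => ((σ j : Fin d) : ℕ))).prod,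
    ?_, ?_⟩
  · intro h0
    have h1 := congrArg (fun f => (FreeAlgebra.equivMonoidAlgebraFreeMonoid f).coeff
      (FreeMonoid.ofList (List.ofFn fun j : Fin d => (j : ℕ)))) h0
    simp only [map_sum, map_smul, of_list_prod, MonoidAlgebra.coeff_sum, Finsupp.finsetSum_apply,
      MonoidAlgebra.coeff_smul, Finsupp.smul_apply, map_zero] at h1
    rw [Finset.sum_eq_single 1] at h1
    · simp at h1
      exact ha h1
    · intro σ _ hσ
      have : FreeMonoid.ofList (List.ofFn fun j => ((σ j : Fin d) : ℕ)) ≠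
          FreeMonoid.ofList (List.ofFn fun j : Fin d => (j : ℕ)) := by
        intro h2
        have h3 := List.ofFn_injective (FreeMonoid.ofList.injective h2)
        apply hσ
        ext j
        exact congrFun h3 j
      simp [MonoidAlgebra.of_apply, MonoidAlgebra.coeff_single, Finsupp.single_apply, this]
    · simp
  · intro v hv
    have := multilinear_zero_of_span
      (∑ σ : Equiv.Perm (Fin d), a σ • (MultilinearMap.mkPiAlgebraFin K d B).domDomCongr σ) S
      (by
        intro y hy
        simpa [sum_apply] using h y hy) (fun k => v k) (fun k => hv k)
    simp only [map_sum, map_smul, map_list_prod, List.map_map]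
    simp only [sum_apply, smul_apply,
      MultilinearMap.domDomCongr_apply, MultilinearMap.mkPiAlgebraFin_apply] at this
    rw [← this]
    refine Finset.sum_congr rfl fun σ _ => ?_
    rw [List.map_ofFn]
    congr 3
    ext j
    simp

/-- the coordinates of an element of `FF ⊗ E` w.r.t. a fixed basis of `FF` -/
def coef {E : Type*} [AddCommGroup E] [Module F E] (i : Module.Basis.ofVectorSpaceIndex F FF) :
    FF ⊗[F] E →ₗ[F] E := by
  classical
  exact Finsupp.lapply i ∘ₗ
    (TensorProduct.equivFinsuppOfBasisLeft (Module.Basis.ofVectorSpace F FF)).toLinearMap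

section coefs

variable {E : Type*} [AddCommGroup E] [Module F E] {E' : Type*} [AddCommGroup E'] [Module F E']

lemma coef_tmul (i) (c : FF) (e : E) :
    coef F FF i (c ⊗ₜ[F] e) = (Module.Basis.ofVectorSpace F FF).repr c i • e := by
  classical
  exact TensorProduct.equivFinsuppOfBasisLeft_apply_tmul_apply _ _ _ _

lemma coef_mem {N : Submodule F E} {y : FF ⊗[F] E} (hy : y ∈ N.baseChange FF) (i) :
    coef F FF i y ∈ N := by
  obtain ⟨z, rfl⟩ := hy
  induction z using TensorProduct.induction_on with
  | zero => simp
  | tmul c e =>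
    rw [LinearMap.baseChange_tmul, coef_tmul]
    exact N.smul_mem _ e.2
  | add x y hx hy => rw [map_add, map_add]; exact add_mem hx hy

lemma mem_baseChange_of_coef {N : Submodule F E} {y : FF ⊗[F] E}
    (hy : ∀ i, coef F FF i y ∈ N) : y ∈ N.baseChange FF := by
  classical
  have h := (TensorProduct.equivFinsuppOfBasisLeft (N := E)
    (Module.Basis.ofVectorSpace F FF)).symm_apply_apply y
  rw [TensorProduct.equivFinsuppOfBasisLeft_symm_apply] at h
  rw [← h]
  exact sum_mem fun i _ => Submodule.tmul_mem_baseChange_of_mem _ (hy i)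

lemma eq_zero_of_coef {y : FF ⊗[F] E} (hy : ∀ i, coef F FF i y = 0) : y = 0 := by
  have := mem_baseChange_of_coef F FF (N := (⊥ : Submodule F E)) (y := y) (by simpa using hy)
  simpa using this

lemma coef_baseChange (f : E →ₗ[F] E') (i) (y : FF ⊗[F] E) :
    coef F FF i (f.baseChange FF y) = f (coef F FF i y) := by
  induction y using TensorProduct.induction_on with
  | zero => simp
  | tmul c e => rw [LinearMap.baseChange_tmul, coef_tmul, coef_tmul, map_smul]
  | add x y hx hy => simp only [map_add, hx, hy]

end coefs

lemma basechangeEnd_tmul (c : FF) (m : Module.End F A) :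
    basechangeEnd F FF (c ⊗ₜ[F] m) = c • m.baseChange FF := rfl

lemma coef_basechangeEnd (i) (y : FF ⊗[F] Module.End F A) (a : A) :
    coef F FF i (basechangeEnd F FF y (1 ⊗ₜ[F] a)) = (coef F FF i y) a := by
  induction y using TensorProduct.induction_on with
  | zero => simp
  | tmul c m =>
    rw [basechangeEnd_tmul, LinearMap.smul_apply, LinearMap.baseChange_tmul, smul_tmul',
      coef_tmul, coef_tmul]
    simp
  | add x y hx hy => simp only [map_add, LinearMap.add_apply, hx, hy]

lemma basechangeEnd_mul (x y : FF ⊗[F] Module.End F A) :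
    basechangeEnd F FF (x * y) = basechangeEnd F FF x * basechangeEnd F FF y := by
  induction x using TensorProduct.induction_on with
  | zero => simp
  | add x x' hx hx' => rw [add_mul, map_add, map_add, add_mul, hx, hx']
  | tmul c m =>
    induction y using TensorProduct.induction_on with
    | zero => simp
    | add x x' hx hx' => rw [mul_add, map_add, map_add, mul_add, hx, hx']
    | tmul d n =>
      rw [Algebra.TensorProduct.tmul_mul_tmul, basechangeEnd_tmul, basechangeEnd_tmul,
        basechangeEnd_tmul, LinearMap.baseChange_mul, smul_mul_smul_comm]

lemma basechangeEnd_inj {x : FF ⊗[F] Module.End F A} (h : basechangeEnd F FF x = 0) : x = 0 := by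
  apply eq_zero_of_coef
  intro i
  ext a
  rw [← coef_basechangeEnd, h]
  simp

lemma mulLeft_baseChange (a : A) : (LinearMap.mulLeft F a).baseChange FF =
    LinearMap.mulLeft FF ((1 : FF) ⊗ₜ[F] a) := by
  ext x
  simp

lemma mulRight_baseChange (a : A) : (LinearMap.mulRight F a).baseChange FF =
    LinearMap.mulRight FF ((1 : FF) ⊗ₜ[F] a) := by
  ext x
  simp

lemma baseChange_mem_multAlg {m : Module.End F A} (hm : m ∈ MultAlg F (A := A)) :
    m.baseChange FF ∈ MultAlg FF (A := FF ⊗[F] A) := by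
  induction hm using NonUnitalAlgebra.adjoin_induction with
  | mem x hx =>
    rcases hx with ⟨a, rfl⟩ | ⟨a, rfl⟩
    · rw [mulLeft_baseChange]; exact mulLeft_mem_multAlg FF _
    · rw [mulRight_baseChange]; exact mulRight_mem_multAlg FF _
  | add y z _ _ hy hz => rw [LinearMap.baseChange_add]; exact add_mem hy hz
  | zero => rw [LinearMap.baseChange_zero]; exact zero_mem _
  | smul r y _ hy =>
    rw [LinearMap.baseChange_smul, ← algebraMap_smul FF r]
    exact SMulMemClass.smul_mem _ hy
  | mul y z _ hz' hy hz => rw [LinearMap.baseChange_mul]; exact mul_mem hy hz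

lemma map_baseChange_le {N : Submodule F (Module.End F A)}
    {P : Submodule FF (Module.End FF (FF ⊗[F] A))}
    (h : ∀ n ∈ N, n.baseChange FF ∈ P) : (N.baseChange FF).map (basechangeEnd F FF) ≤ P := by
  rw [Submodule.baseChange_eq_span, Submodule.map_span, Submodule.span_le]
  rintro _ ⟨_, ⟨n, hn, rfl⟩, rfl⟩
  change basechangeEnd F FF (1 ⊗ₜ n) ∈ P
  rw [basechangeEnd_tmul, one_smul]
  exact h n hn

lemma baseChange_mul_mem {x y : FF ⊗[F] Module.End F A}
    (hx : x ∈ ((MultAlg F (A := A)).toSubmodule).baseChange FF)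
    (hy : y ∈ ((MultAlg F (A := A)).toSubmodule).baseChange FF) :
    x * y ∈ ((MultAlg F (A := A)).toSubmodule).baseChange FF := by
  obtain ⟨x, rfl⟩ := hx
  obtain ⟨y, rfl⟩ := hy
  induction x using TensorProduct.induction_on with
  | zero => simp
  | add x x' hx hx' => rw [map_add, add_mul]; exact add_mem hx hx'
  | tmul c m =>
    induction y using TensorProduct.induction_on with
    | zero => simp
    | add x x' hx hx' => rw [map_add, mul_add]; exact add_mem hx hx'
    | tmul d n =>
      rw [LinearMap.baseChange_tmul, LinearMap.baseChange_tmul,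
        Algebra.TensorProduct.tmul_mul_tmul]
      exact Submodule.tmul_mem_baseChange_of_mem _ ((MultAlg F (A := A)).mul_mem' m.2 n.2)

lemma map_multAlg :
    Submodule.map (basechangeEnd F FF) (((MultAlg F (A := A)).toSubmodule).baseChange FF) =
        (MultAlg FF (A := FF ⊗[F] A)).toSubmodule := by
  apply le_antisymm
  · apply map_baseChange_le
    intro m hm
    exact baseChange_mem_multAlg F FF hm
  · intro m hm
    replace hm : m ∈ MultAlg FF (A := FF ⊗[F] A) := hm
    induction hm using NonUnitalAlgebra.adjoin_induction with
    | mem x hx =>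
      rcases hx with ⟨a, rfl⟩ | ⟨a, rfl⟩
      · induction a using TensorProduct.induction_on with
        | zero => simp
        | add a b ha hb =>
          have : LinearMap.mulLeft FF (a + b) = LinearMap.mulLeft FF a + LinearMap.mulLeft FF b := by
            ext; simp [add_mul]
          rw [this]; exact add_mem ha hb
        | tmul c a =>
          refine ⟨c ⊗ₜ LinearMap.mulLeft F a,
            Submodule.tmul_mem_baseChange_of_mem _ (mulLeft_mem_multAlg F a), ?_⟩
          rw [basechangeEnd_tmul]
          ext x
          simp [smul_tmul']
      · induction a using TensorProduct.induction_on with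
        | zero => simp
        | add a b ha hb =>
          have : LinearMap.mulRight FF (a + b) =
              LinearMap.mulRight FF a + LinearMap.mulRight FF b := by
            ext; simp [mul_add]
          rw [this]; exact add_mem ha hb
        | tmul c a =>
          refine ⟨c ⊗ₜ LinearMap.mulRight F a,
            Submodule.tmul_mem_baseChange_of_mem _ (mulRight_mem_multAlg F a), ?_⟩
          rw [basechangeEnd_tmul]
          ext x
          simp [smul_tmul']
    | add y z _ _ hy hz => exact add_mem hy hz
    | zero => exact zero_mem _
    | smul r y _ hy => exact Submodule.smul_mem _ r hy
    | mul y z _ _ hy hz =>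
      obtain ⟨y, hy, rfl⟩ := hy
      obtain ⟨z, hz, rfl⟩ := hz
      exact ⟨y * z, baseChange_mul_mem F FF hy hz, basechangeEnd_mul F FF y z⟩

lemma baseChange_isAlgGrading {𝒜 : G → Submodule F A} (hgr : IsAlgGrading F 𝒜) :
    IsAlgGrading FF (fun g => (𝒜 g).baseChange FF) := by
  refine ⟨hgr.1.baseChange, ?_⟩
  rintro g h _ ⟨a, rfl⟩ _ ⟨b, rfl⟩
  induction a using TensorProduct.induction_on with
  | zero => simp
  | add x x' hx hx' => rw [map_add, add_mul]; exact add_mem hx hx'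
  | tmul c m =>
    induction b using TensorProduct.induction_on with
    | zero => simp
    | add x x' hx hx' => rw [map_add, mul_add]; exact add_mem hx hx'
    | tmul d n =>
      rw [LinearMap.baseChange_tmul, LinearMap.baseChange_tmul,
        Algebra.TensorProduct.tmul_mul_tmul]
      exact Submodule.tmul_mem_baseChange_of_mem _ (hgr.2 g h _ m.2 _ n.2)

lemma gspan_le_span {𝒜 : G → Submodule F A}
    (hbase : ∀ φ : Module.End F A,
      φ ∈ centroid F (A := A) ⊓ endGrading F 𝒜 1 ↔ ∃ c : F, φ = c • (1 : Module.End F A))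
    (g : G) (L : List (A × G)) (hL : ∀ q ∈ L, q.2 = g) :
    gspan F 𝒜 L g ≤ Submodule.span F {x | ∃ q ∈ L, q.1 = x} := by
  induction L with
  | nil => simp [gspan]
  | cons q L ih =>
    obtain ⟨u, k⟩ := q
    obtain rfl : k = g := hL (u, k) List.mem_cons_self
    refine sup_le ?_ ((ih fun q hq => hL q (List.mem_cons_of_mem _ hq)).trans ?_)
    · rintro _ ⟨φ, hφ, rfl⟩
      rw [mul_inv_cancel] at hφ
      obtain ⟨c, rfl⟩ := (hbase φ).1 hφ
      refine Submodule.smul_mem _ c (Submodule.subset_span ⟨(u, k), List.mem_cons_self, rfl⟩)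
    · apply Submodule.span_mono
      rintro x ⟨q, hq, rfl⟩
      exact ⟨q, List.mem_cons_of_mem _ hq, rfl⟩

lemma ideal_multAlg_stable {I : Submodule F A} (hI : IsMulIdeal F I) {m : Module.End F A}
    (hm : m ∈ MultAlg F (A := A)) : ∀ x ∈ I, m x ∈ I := by
  induction hm using NonUnitalAlgebra.adjoin_induction with
  | mem y hy =>
    intro x hx
    rcases hy with ⟨a, rfl⟩ | ⟨a, rfl⟩
    · exact (hI a x hx).1
    · exact (hI a x hx).2
  | add y z _ _ hy hz => exact fun x hx => add_mem (hy x hx) (hz x hx)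
  | zero => exact fun x hx => zero_mem _
  | smul r y _ hy => exact fun x hx => I.smul_mem r (hy x hx)
  | mul y z _ _ hy hz => exact fun x hx => hy _ (hz x hx)

lemma baseChange_gradedSimple {𝒜 : G → Submodule F A} (hgr : IsAlgGrading F 𝒜)
    (hsimp : IsGradedSimple F 𝒜)
    (hbase : ∀ φ : Module.End F A,
      φ ∈ centroid F (A := A) ⊓ endGrading F 𝒜 1 ↔ ∃ c : F, φ = c • (1 : Module.End F A)) :
    IsGradedSimple FF (fun g => (𝒜 g).baseChange FF) := by
  constructor
  · obtain ⟨a, b, hab⟩ := hsimp.1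
    refine ⟨1 ⊗ₜ a, 1 ⊗ₜ b, ?_⟩
    rw [Algebra.TensorProduct.tmul_mul_tmul, mul_one]
    intro h
    apply hab
    have h1 : (Module.Basis.ofVectorSpace F FF).repr 1 ≠ 0 := by simp
    obtain ⟨i, hi⟩ := Finsupp.ne_iff.1 h1
    have h2 := congrArg (coef F FF i) h
    rw [coef_tmul, map_zero] at h2
    exact (smul_eq_zero.1 h2).resolve_left hi
  · intro I hI hIh
    by_cases hbot : I = ⊥
    · exact Or.inl hbot
    right
    have : ∃ g, I ⊓ (𝒜 g).baseChange FF ≠ ⊥ := by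
      by_contra! h
      apply hbot
      rw [hIh]
      exact iSup_eq_bot.2 h
    obtain ⟨g, hg⟩ := this
    obtain ⟨z, ⟨hzI, hzg⟩, hz0⟩ := Submodule.exists_mem_ne_zero_of_ne_bot hg
    obtain ⟨z', rfl⟩ := hzg
    classical
    let b := Module.Basis.ofVectorSpace F (𝒜 g)
    let B := b.baseChange FF
    set c := B.repr z' with hc
    have hc0 : c ≠ 0 := by
      intro h
      apply hz0
      have : z' = 0 := by
        rw [hc] at h
        simpa using h
      rw [this, map_zero]
    obtain ⟨i0, hi0⟩ := Finsupp.ne_iff.1 hc0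
    have hz : (𝒜 g).subtype.baseChange FF z' = ∑ i ∈ c.support, c i ⊗ₜ[F] (b i : A) := by
      conv_lhs => rw [← B.linearCombination_repr z']
      rw [Finsupp.linearCombination_apply, Finsupp.sum, map_sum]
      refine Finset.sum_congr rfl fun i _ => ?_
      rw [map_smul, Module.Basis.baseChange_apply, LinearMap.baseChange_tmul, smul_tmul',
        smul_eq_mul, mul_one]
      rfl
    let L : List (A × G) := (c.support.erase i0).toList.map (fun i => ((b i : A), g))
    have hL : ∀ q ∈ L, q.1 ∈ 𝒜 q.2 := by
      intro q hq
      obtain ⟨i, _, rfl⟩ := List.mem_map.1 hq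
      exact (b i).2
    rcases ann_dichotomy F hgr hsimp L hL (b i0).2 with hd | hd
    · exfalso
      have h1 := graded_density F hgr hsimp L hL (b i0).2 hd
      have h2 := gspan_le_span F hbase g L (by
        intro q hq
        obtain ⟨i, _, rfl⟩ := List.mem_map.1 hq
        rfl) h1
      have hli : LinearIndependent F (fun i => (b i : A)) :=
        b.linearIndependent.map' (𝒜 g).subtype (Submodule.ker_subtype _)
      refine hli.notMem_span_image (s := {i | i ≠ i0}) (x := i0) (by simp)
        (Submodule.span_mono ?_ h2)
      rintro x ⟨q, hq, rfl⟩
      obtain ⟨i, hi, rfl⟩ := List.mem_map.1 hq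
      have : i ≠ i0 := by
        have := Finset.mem_toList.1 hi
        exact Finset.ne_of_mem_erase this
      exact ⟨i, this, rfl⟩
    · rw [eq_top_iff]
      intro t _
      induction t using TensorProduct.induction_on with
      | zero => exact zero_mem _
      | add x y hx hy => exact add_mem (hx trivial) (hy trivial)
      | tmul e a =>
        obtain ⟨m, hm, hma⟩ := hd a
        have h1 := ideal_multAlg_stable FF hI (baseChange_mem_multAlg F FF hm.1) _ hzI
        rw [hz, map_sum, Finset.sum_eq_single i0] at h1
        · rw [LinearMap.baseChange_tmul, hma] at h1
          have h2 := I.smul_mem (e * (c i0)⁻¹) h1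
          rw [smul_tmul', smul_eq_mul, inv_mul_cancel_right₀ hi0] at h2
          exact h2
        · intro i hi hne
          rw [LinearMap.baseChange_tmul]
          have := hm.2 ((b i : A), g) (List.mem_map.2
            ⟨i, Finset.mem_toList.2 (Finset.mem_erase.2 ⟨hne, hi⟩), rfl⟩)
          simp only at this
          rw [this, tmul_zero]
        · intro h
          exact absurd (Finsupp.notMem_support_iff.1 h) hi0

lemma baseChange_PI
    (hPI : SatisfiesOrdinaryPI F (MultAlg F (A := A) : Set (Module.End F A))) :
    SatisfiesOrdinaryPI FF
      (MultAlg FF (A := FF ⊗[F] A) : Set (Module.End FF (FF ⊗[F] A))) := by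
  obtain ⟨d, a, ha, h⟩ := multilinearize (MultAlg F (A := A)).toSubmodule hPI
  have h1 := satisfiesPI_of_multilinear (K := FF)
    ((fun m : Module.End F A => m.baseChange FF) '' (MultAlg F (A := A) : Set (Module.End F A)))
    (fun σ => algebraMap F FF (a σ)) (by simpa using ha) (by
      intro y hy
      choose x hx hxy using hy
      have h2 := congrArg (Module.End.baseChangeHom F FF A) (h x hx)
      simp only [map_sum, map_smul, map_list_prod, List.map_ofFn, map_zero] at h2
      rw [← h2]
      refine Finset.sum_congr rfl fun σ _ => ?_
      rw [algebraMap_smul]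
      congr 3
      ext1 j
      rw [← hxy]
      rfl)
  obtain ⟨f, hf, hf'⟩ := h1
  refine ⟨f, hf, fun v hv => hf' v fun i => ?_⟩
  have h3 : v i ∈ (MultAlg FF (A := FF ⊗[F] A)).toSubmodule := hv i
  rw [← map_multAlg, Submodule.baseChange_eq_span, Submodule.map_span] at h3
  refine Submodule.span_mono ?_ h3
  rintro _ ⟨_, ⟨m, hm, rfl⟩, rfl⟩
  refine ⟨m, hm, ?_⟩
  change _ = basechangeEnd F FF (1 ⊗ₜ m)
  rw [basechangeEnd_tmul, one_smul]

lemma coef_endGrading {𝒜 : G → Submodule F A} {y : FF ⊗[F] Module.End F A} {h : G}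
    (hy : basechangeEnd F FF y ∈ endGrading FF (fun g => (𝒜 g).baseChange FF) h) (i) :
    coef F FF i y ∈ endGrading F 𝒜 h := by
  intro g x hx
  rw [← coef_basechangeEnd]
  exact coef_mem F FF (hy g _ (Submodule.tmul_mem_baseChange_of_mem _ hx)) i

lemma baseChange_mem_endGrading {𝒜 : G → Submodule F A} {m : Module.End F A} {h : G}
    (hm : m ∈ endGrading F 𝒜 h) :
    m.baseChange FF ∈ endGrading FF (fun g => (𝒜 g).baseChange FF) h := by
  rintro g _ ⟨x, rfl⟩
  induction x using TensorProduct.induction_on with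
  | zero => simp
  | add x y hx hy => rw [map_add, map_add]; exact add_mem hx hy
  | tmul c x =>
    rw [LinearMap.baseChange_tmul, LinearMap.baseChange_tmul]
    exact Submodule.tmul_mem_baseChange_of_mem _ (hm g _ x.2)

lemma map_multAlg_graded (𝒜 : G → Submodule F A) (h : G) : Submodule.map (basechangeEnd F FF)
        (((MultAlg F (A := A)).toSubmodule ⊓ endGrading F 𝒜 h).baseChange FF) =
        (MultAlg FF (A := FF ⊗[F] A)).toSubmodule ⊓
          endGrading FF (fun g => (𝒜 g).baseChange FF) h := by
  apply le_antisymm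
  · apply map_baseChange_le
    intro m hm
    exact ⟨baseChange_mem_multAlg F FF hm.1, baseChange_mem_endGrading F FF hm.2⟩
  · rintro _ ⟨hm, hh⟩
    rw [← map_multAlg] at hm
    obtain ⟨y, hy, rfl⟩ := hm
    exact ⟨y, mem_baseChange_of_coef F FF fun i =>
      ⟨coef_mem F FF hy i, coef_endGrading F FF hh i⟩, rfl⟩

lemma coef_centroid {y : FF ⊗[F] Module.End F A}
    (hy : basechangeEnd F FF y ∈ multCommutant F FF) (i) :
    coef F FF i y ∈ centroid F (A := A) := by
  apply mem_centroid_of_comm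
  intro m hm x
  have h1 := hy _ (baseChange_mem_multAlg F FF hm)
  have h2 := congrArg (fun f : Module.End FF (FF ⊗[F] A) => coef F FF i (f (1 ⊗ₜ x))) h1
  simp only [Module.End.mul_apply, LinearMap.baseChange_tmul, coef_basechangeEnd,
    coef_baseChange] at h2
  exact h2.symm

lemma centroid_mem_commutant {φ : Module.End F A} (hφ : φ ∈ centroid F (A := A)) :
    φ.baseChange FF ∈ multCommutant F FF := by
  intro m hm
  replace hm : m ∈ (MultAlg FF (A := FF ⊗[F] A)).toSubmodule := hm
  rw [← map_multAlg, Submodule.baseChange_eq_span, Submodule.map_span] at hm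
  induction hm using Submodule.span_induction with
  | mem x hx =>
    obtain ⟨_, ⟨m, hm, rfl⟩, rfl⟩ := hx
    change _ * basechangeEnd F FF (1 ⊗ₜ m) = basechangeEnd F FF (1 ⊗ₜ m) * _
    rw [basechangeEnd_tmul, one_smul, ← LinearMap.baseChange_mul, ← LinearMap.baseChange_mul]
    congr 1
    ext x
    exact (multAlg_comm_centroid F hm hφ x).symm
  | zero => simp
  | add x y _ _ hx hy => rw [mul_add, add_mul, hx, hy]
  | smul r x _ hx => rw [mul_smul_comm, smul_mul_assoc, hx]

/-- Let `U` be a `G`-graded simple algebra (`G` abelian) whose multiplication algebra satisfies an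
ordinary polynomial identity, over the field `F = Γ(U)_e`.  For any field extension `FF` of `F`,
the algebra `Ũ = FF ⊗ U` is graded simple, `M(Ũ)` satisfies an ordinary polynomial identity,
`FF ⊗ M(U) ≅ M(Ũ)` as graded algebras via the base-change map, and the center of `M(Ũ)` is
isomorphic as a graded algebra to `FF ⊗ Γ(U)` via the same map. -/
theorem scalar_extension_of_graded_simple
    (𝒜 : G → Submodule F A) (hgr : IsAlgGrading F 𝒜) (hsimp : IsGradedSimple F 𝒜)
    (hPI : SatisfiesOrdinaryPI F (MultAlg F (A := A) : Set (Module.End F A)))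
    (hbase : ∀ φ : Module.End F A,
      φ ∈ centroid F (A := A) ⊓ endGrading F 𝒜 1 ↔ ∃ c : F, φ = c • (1 : Module.End F A)) :
    -- `Ũ` is a graded simple `FF`-algebra
    (IsAlgGrading FF (fun g => (𝒜 g).baseChange FF) ∧
      IsGradedSimple FF (fun g => (𝒜 g).baseChange FF)) ∧
    -- `M(Ũ)` satisfies an ordinary polynomial identity
    SatisfiesOrdinaryPI FF
      (MultAlg FF (A := FF ⊗[F] A) : Set (Module.End FF (FF ⊗[F] A))) ∧
    -- the base-change map `FF ⊗ M(U) → M(Ũ)` is an isomorphism of graded algebras: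
    (∀ x y : FF ⊗[F] Module.End F A,
        basechangeEnd F FF (x * y) = basechangeEnd F FF x * basechangeEnd F FF y) ∧
    (∀ x ∈ ((MultAlg F (A := A)).toSubmodule).baseChange FF,
        basechangeEnd F FF x = 0 → x = 0) ∧
    (Submodule.map (basechangeEnd F FF) (((MultAlg F (A := A)).toSubmodule).baseChange FF) =
        (MultAlg FF (A := FF ⊗[F] A)).toSubmodule) ∧
    (∀ h : G, Submodule.map (basechangeEnd F FF)
        (((MultAlg F (A := A)).toSubmodule ⊓ endGrading F 𝒜 h).baseChange FF) =
        (MultAlg FF (A := FF ⊗[F] A)).toSubmodule ⊓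
          endGrading FF (fun g => (𝒜 g).baseChange FF) h) ∧
    -- and it maps `FF ⊗ Γ(U)` isomorphically (as graded algebras) onto the center of `M(Ũ)`
    (Submodule.map (basechangeEnd F FF) ((gradedCentroid F 𝒜).baseChange FF) =
        (MultAlg FF (A := FF ⊗[F] A)).toSubmodule ⊓ multCommutant F FF) ∧
    (∀ h : G, Submodule.map (basechangeEnd F FF)
        ((centroid F (A := A) ⊓ endGrading F 𝒜 h).baseChange FF) =
        (MultAlg FF (A := FF ⊗[F] A)).toSubmodule ⊓ multCommutant F FF ⊓
          endGrading FF (fun g => (𝒜 g).baseChange FF) h) := by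
  refine ⟨⟨baseChange_isAlgGrading F FF hgr, baseChange_gradedSimple F FF hgr hsimp hbase⟩,
    baseChange_PI F FF hPI, basechangeEnd_mul F FF, fun x _ h => basechangeEnd_inj F FF h,
    map_multAlg F FF, map_multAlg_graded F FF 𝒜, ?_, fun h => ?_⟩
  · apply le_antisymm
    · apply map_baseChange_le
      intro φ hφ
      have hφ' : φ ∈ centroid F (A := A) :=
        (iSup_le fun _ => inf_le_left : gradedCentroid F 𝒜 ≤ centroid F (A := A)) hφ
      exact ⟨baseChange_mem_multAlg F FF (centroid_le_multAlg F hgr hsimp hPI hφ'),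
        centroid_mem_commutant F FF hφ'⟩
    · rintro _ ⟨hm, hc⟩
      rw [← map_multAlg] at hm
      obtain ⟨y, hy, rfl⟩ := hm
      exact ⟨y, mem_baseChange_of_coef F FF fun i =>
        mem_gradedCentroid F hgr (coef_centroid F FF hc i) (coef_mem F FF hy i), rfl⟩
  · apply le_antisymm
    · apply map_baseChange_le
      intro φ hφ
      exact ⟨⟨baseChange_mem_multAlg F FF (centroid_le_multAlg F hgr hsimp hPI hφ.1),
        centroid_mem_commutant F FF hφ.1⟩, baseChange_mem_endGrading F FF hφ.2⟩
    · rintro _ ⟨⟨hm, hc⟩, hh⟩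
      rw [← map_multAlg] at hm
      obtain ⟨y, hy, rfl⟩ := hm
      exact ⟨y, mem_baseChange_of_coef F FF fun i =>
        ⟨coef_centroid F FF hc i, coef_endGrading F FF hh i⟩, rfl⟩

end
end

section
/- With the generic-elements setup (G abelian, U a G-graded simple algebra finite-dimensional over F = Γ(U)_e, F_U the algebra of generic elements inside Ũ = F̃ ⊗_F U): the F-algebra Z_U = Z(M(F_U))_e is isomorphic as an F-algebra to an F-subalgebra of the field F̃; in particular Z_U is a commutative integral domain. -/
noncomputable section

open TensorProduct

variable (F : Type*) [Field F] {G : Type*} [CommGroup G] [DecidableEq G]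
variable (FF : Type*) [Field FF] [Algebra F FF] [Algebra (MvPolynomial (G × ℕ × ℕ) F) FF]
  [IsScalarTower F (MvPolynomial (G × ℕ × ℕ) F) FF]
variable {A : Type*} [NonUnitalNonAssocRing A] [Module F A] [SMulCommClass F A A]
  [IsScalarTower F A A]

/-- the set of generic elements `y_i^g = ∑_j t_{ij}^g ⊗ u_j^g` of `Ũ = FF ⊗ U`,
relative to the choice of bases `bU g` of the homogeneous components. -/
def genericElems (𝒜 : G → Submodule F A) (nU : G → ℕ)
    (bU : ∀ g : G, Module.Basis (Fin (nU g)) F (𝒜 g)) : Set (FF ⊗[F] A) :=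
  {x | ∃ (g : G) (i : Fin (nU g)), x = ∑ j : Fin (nU g),
    (algebraMap (MvPolynomial (G × ℕ × ℕ) F) FF (MvPolynomial.X (g, (i : ℕ), (j : ℕ)))) ⊗ₜ[F]
      ((bU g j : A))}

/-- the algebra of generic elements `F_U`, an `F`-subalgebra of `Ũ = FF ⊗ U`. -/
def genericAlg (𝒜 : G → Submodule F A) (nU : G → ℕ)
    (bU : ∀ g : G, Module.Basis (Fin (nU g)) F (𝒜 g)) : NonUnitalSubalgebra F (FF ⊗[F] A) :=
  NonUnitalAlgebra.adjoin F (genericElems F FF 𝒜 nU bU)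

/-- the degree-`g` component of an `F`-subalgebra `L` of `Ũ = FF ⊗ U`, induced by the grading
of `Ũ`. -/
def subComp (𝒜 : G → Submodule F A) (L : NonUnitalSubalgebra F (FF ⊗[F] A)) (g : G) :
    Submodule F ↥L where
  carrier := {x | (x : FF ⊗[F] A) ∈ (𝒜 g).baseChange FF}
  add_mem' := fun {x y} hx hy => by
    simpa using (((𝒜 g).baseChange FF).restrictScalars F).add_mem hx hy
  zero_mem' := by simp
  smul_mem' := fun c x hx => by
    simpa using (((𝒜 g).baseChange FF).restrictScalars F).smul_mem c hx

/-- the degree-`e` component `Z(M(F_U))_e` of the center of the multiplication algebra of an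
`F`-subalgebra `L` of `Ũ` (applied below to `L = F_U` and to its central localization). -/
def centerMultE (𝒜 : G → Submodule F A) (L : NonUnitalSubalgebra F (FF ⊗[F] A)) :
    Set (Module.End F ↥L) :=
  {m | m ∈ MultAlg F (A := ↥L) ∧ (∀ m' ∈ MultAlg F (A := ↥L), m * m' = m' * m) ∧
    m ∈ endGrading F (subComp F FF 𝒜 L) 1}

end

open TensorProduct in
/-- the contraction `π ⊗ id : FF ⊗ A → A` -/
noncomputable def contr {F FF A : Type*} [Field F] [Field FF] [Algebra F FF]
    [NonUnitalNonAssocRing A] [Module F A] (π : Module.Dual F FF) : FF ⊗[F] A →ₗ[F] A :=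
  (TensorProduct.lid F A).toLinearMap ∘ₗ LinearMap.rTensor A π

section contrLemmas
open TensorProduct
variable {F FF A : Type*} [Field F] [Field FF] [Algebra F FF]
  [NonUnitalNonAssocRing A] [Module F A]

theorem contr_tmul (π : Module.Dual F FF) (c : FF) (a : A) :
    contr π (c ⊗ₜ[F] a) = π c • a := by
  simp [contr]

theorem contr_mem (π : Module.Dual F FF) (p : Submodule F A) (z : FF ⊗[F] A)
    (hz : z ∈ p.baseChange FF) : contr π z ∈ p := by
  rw [Submodule.baseChange_eq_span] at hz
  have key : ∀ (c : FF), contr π (c • z) ∈ p := by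
    induction hz using Submodule.span_induction with
    | mem x hx =>
      obtain ⟨a, ha, rfl⟩ := hx
      intro c
      rw [TensorProduct.mk_apply, TensorProduct.smul_tmul', contr_tmul]
      exact p.smul_mem _ ha
    | zero => intro c; simp
    | add x y _ _ hx hy => intro c; rw [smul_add, map_add]; exact p.add_mem (hx c) (hy c)
    | smul d x _ hx => intro c; rw [smul_smul]; exact hx _
  simpa using key 1

theorem contr_sep [FiniteDimensional F A] (z : FF ⊗[F] A)
    (hz : ∀ π : Module.Dual F FF, contr π z = 0) : z = 0 := by
  let b := Module.finBasis F A
  let B := Algebra.TensorProduct.basis FF b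
  apply B.ext_elem
  intro i
  rw [map_zero, Finsupp.zero_apply]
  rw [← Module.forall_dual_apply_eq_zero_iff F]
  intro π
  have : ∀ w : FF ⊗[F] A, π (B.repr w i) = b.coord i (contr π w) := by
    intro w
    induction w using TensorProduct.induction_on with
    | zero => simp
    | tmul c a =>
      rw [contr_tmul]
      simp [B, Algebra.TensorProduct.basis_repr_tmul, Algebra.smul_def, mul_comm]
      rw [mul_comm c, ← Algebra.smul_def, map_smul, smul_eq_mul, mul_comm]
    | add x y hx hy => simp only [map_add, Finsupp.add_apply, hx, hy]
  rw [this, hz, map_zero]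

variable [SMulCommClass F A A] [IsScalarTower F A A]

theorem contr_mul_left (π : Module.Dual F FF) (a : A) (z : FF ⊗[F] A) :
    contr π (((1 : FF) ⊗ₜ[F] a) * z) = a * contr π z := by
  induction z using TensorProduct.induction_on with
  | zero => simp
  | tmul c x => simp [contr_tmul, mul_smul_comm]
  | add x y hx hy => simp only [mul_add, map_add, hx, hy]

theorem contr_mul_right (π : Module.Dual F FF) (a : A) (z : FF ⊗[F] A) :
    contr π (z * ((1 : FF) ⊗ₜ[F] a)) = contr π z * a := by
  induction z using TensorProduct.induction_on with
  | zero => simp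
  | tmul c x => simp [contr_tmul, smul_mul_assoc]
  | add x y hx hy => simp only [add_mul, map_add, hx, hy]

/-- The degree-`e` part of the centroid of `FF ⊗ A` consists of scalars. -/
theorem centroid_baseChange {G : Type*} [CommGroup G] [DecidableEq G] [FiniteDimensional F A]
    (𝒜 : G → Submodule F A) (hne : ∃ a : A, a ≠ 0)
    (hbase : ∀ φ : Module.End F A,
      φ ∈ centroid F (A := A) ⊓ endGrading F 𝒜 1 ↔ ∃ c : F, φ = c • (1 : Module.End F A))
    (φ : Module.End FF (FF ⊗[F] A))
    (h1 : ∀ x y, φ (x * y) = x * φ y) (h2 : ∀ x y, φ (x * y) = φ x * y)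
    (h3 : ∀ g, ∀ x ∈ (𝒜 g).baseChange FF, φ x ∈ (𝒜 g).baseChange FF) :
    ∃ c : FF, ∀ x, φ x = c • x := by
  have key : ∀ π : Module.Dual F FF, ∃ c : F, ∀ a : A, contr π (φ (1 ⊗ₜ a)) = c • a := by
    intro π
    let ψ : Module.End F A := (contr π) ∘ₗ (φ.restrictScalars F) ∘ₗ (TensorProduct.mk F FF A 1)
    have hψ : ∀ a, ψ a = contr π (φ (1 ⊗ₜ a)) := fun a => rfl
    obtain ⟨c, hc⟩ := (hbase ψ).1 (by
      refine ⟨?_, ?_⟩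
      · intro a x
        have e1 : (1 : FF) ⊗ₜ[F] (a * x) = (1 ⊗ₜ a) * (1 ⊗ₜ x) := by simp
        have e2 : (1 : FF) ⊗ₜ[F] (x * a) = (1 ⊗ₜ x) * (1 ⊗ₜ a) := by simp
        rw [hψ, hψ, hψ, e1, e2, h1, h2, contr_mul_left, contr_mul_right]
        exact ⟨rfl, rfl⟩
      · intro g x hx
        rw [one_mul, hψ]
        exact contr_mem _ _ _ (h3 g _ (Submodule.tmul_mem_baseChange_of_mem _ hx)))
    refine ⟨c, fun a => ?_⟩
    rw [← hψ, hc]; simp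
  obtain ⟨a0, ha0⟩ := hne
  obtain ⟨f, hf⟩ : ∃ f : Module.Dual F A, f a0 = 1 := by
    obtain ⟨f, hf⟩ : ∃ f : Module.Dual F A, f a0 ≠ 0 := by
      by_contra! h
      exact ha0 ((Module.forall_dual_apply_eq_zero_iff F a0).1 h)
    exact ⟨(f a0)⁻¹ • f, by simp [hf]⟩
  let q : FF ⊗[F] A →ₗ[F] FF := (TensorProduct.rid F FF).toLinearMap ∘ₗ LinearMap.lTensor FF f
  have hq : ∀ (π : Module.Dual F FF) z, π (q z) = f (contr π z) := by
    intro π z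
    induction z using TensorProduct.induction_on with
    | zero => simp
    | tmul c x => simp [contr_tmul, q, mul_comm]
    | add x y hx hy => simp only [map_add, hx, hy]
  refine ⟨q (φ (1 ⊗ₜ a0)), ?_⟩
  have main : ∀ a : A, φ (1 ⊗ₜ a) = q (φ (1 ⊗ₜ a0)) • ((1 : FF) ⊗ₜ[F] a) := by
    intro a
    rw [← sub_eq_zero]
    apply contr_sep
    intro π
    obtain ⟨c, hc⟩ := key π
    rw [map_sub, TensorProduct.smul_tmul', contr_tmul, hc, smul_eq_mul, mul_one, hq, hc, map_smul,
      hf]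
    simp
  intro x
  induction x using TensorProduct.induction_on with
  | zero => simp
  | tmul c a =>
    have : c ⊗ₜ[F] a = c • ((1 : FF) ⊗ₜ[F] a) := by simp [TensorProduct.smul_tmul']
    rw [this, map_smul, main, smul_comm]
  | add x y hx hy => rw [map_add, hx, hy, smul_add]

end contrLemmas

section genericLemmas
open TensorProduct
variable {F : Type*} [Field F] {G : Type*} [CommGroup G] [DecidableEq G]
    {FF : Type*} [Field FF] [Algebra F FF] [Algebra (MvPolynomial (G × ℕ × ℕ) F) FF]
    [IsScalarTower F (MvPolynomial (G × ℕ × ℕ) F) FF]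
    {A : Type*} [NonUnitalNonAssocRing A] [Module F A] [SMulCommClass F A A]
    [IsScalarTower F A A]

theorem basis_mem_span_generic
    (hinj : Function.Injective (algebraMap (MvPolynomial (G × ℕ × ℕ) F) FF))
    (𝒜 : G → Submodule F A)
    (nU : G → ℕ) (bU : ∀ g : G, Module.Basis (Fin (nU g)) F (𝒜 g)) (g : G) (k : Fin (nU g)) :
    (1 : FF) ⊗ₜ[F] (bU g k : A) ∈ Submodule.span FF
      ({x | x ∈ genericElems F FF 𝒜 nU bU ∧ x ∈ (𝒜 g).baseChange FF}) := by
  let M0 : Matrix (Fin (nU g)) (Fin (nU g)) (MvPolynomial (G × ℕ × ℕ) F) :=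
    Matrix.of fun i j => MvPolynomial.X (g, (i : ℕ), (j : ℕ))
  let M := M0.map (algebraMap (MvPolynomial (G × ℕ × ℕ) F) FF)
  have hd0 : M0.det ≠ 0 := by
    intro h
    let ev := MvPolynomial.eval (R := F) (fun p : G × ℕ × ℕ => if p.2.1 = p.2.2 then (1 : F) else 0)
    have h2 := congrArg ev h
    rw [RingHom.map_det] at h2
    have h3 : ev.mapMatrix M0 = 1 := by
      ext i j
      simp [ev, M0, Matrix.one_apply, Fin.ext_iff]
    rw [h3] at h2
    simp at h2
  have hd : IsUnit M.det := by
    rw [isUnit_iff_ne_zero]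
    have : M.det = algebraMap _ FF M0.det := by
      rw [RingHom.map_det]; rfl
    rw [this]
    exact (map_ne_zero_iff _ hinj).2 hd0
  let y : Fin (nU g) → FF ⊗[F] A := fun i => ∑ j, M i j ⊗ₜ[F] (bU g j : A)
  have hy : ∀ i, y i ∈ Submodule.span FF
      ({x | x ∈ genericElems F FF 𝒜 nU bU ∧ x ∈ (𝒜 g).baseChange FF}) := by
    intro i
    apply Submodule.subset_span
    refine ⟨⟨g, i, rfl⟩, ?_⟩
    exact Submodule.sum_mem _ fun j _ => Submodule.tmul_mem_baseChange_of_mem _ (bU g j).2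
  have hk : (1 : FF) ⊗ₜ[F] (bU g k : A) = ∑ i, M⁻¹ k i • y i := by
    simp only [y, Finset.smul_sum, TensorProduct.smul_tmul', smul_eq_mul]
    rw [Finset.sum_comm]
    simp only [← TensorProduct.sum_tmul]
    have : ∀ j, ∑ i, M⁻¹ k i * M i j = (1 : Matrix _ _ FF) k j := by
      intro j
      rw [← Matrix.mul_apply, Matrix.nonsing_inv_mul _ hd]
    simp only [this]
    rw [Finset.sum_eq_single k]
    · simp
    · intro j _ hj; simp [Matrix.one_apply, hj.symm]
    · simp
  rw [hk]
  exact Submodule.sum_mem _ fun i _ => Submodule.smul_mem _ _ (hy i)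

theorem comp_le_span_generic
    (hinj : Function.Injective (algebraMap (MvPolynomial (G × ℕ × ℕ) F) FF))
    (𝒜 : G → Submodule F A)
    (nU : G → ℕ) (bU : ∀ g : G, Module.Basis (Fin (nU g)) F (𝒜 g)) (g : G) :
    (𝒜 g).baseChange FF ≤ Submodule.span FF
      ({x | x ∈ genericElems F FF 𝒜 nU bU ∧ x ∈ (𝒜 g).baseChange FF}) := by
  refine le_trans (Submodule.baseChange_eq_span _ (𝒜 g)).le (Submodule.span_le.2 ?_)
  rintro _ ⟨a, ha, rfl⟩
  have h := (bU g).sum_repr ⟨a, ha⟩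
  have h' : a = ∑ i, (bU g).repr ⟨a, ha⟩ i • (bU g i : A) := by
    have := congrArg Subtype.val h
    rw [← Submodule.coe_subtype, map_sum] at this
    simpa using this.symm
  rw [h', map_sum]
  refine Submodule.sum_mem _ fun i _ => ?_
  rw [TensorProduct.mk_apply, TensorProduct.tmul_smul, ← algebraMap_smul FF]
  exact Submodule.smul_mem _ _ (basis_mem_span_generic hinj 𝒜 nU bU g i)

theorem span_genericAlg
    (hinj : Function.Injective (algebraMap (MvPolynomial (G × ℕ × ℕ) F) FF))
    (𝒜 : G → Submodule F A) (htop : ⨆ g, 𝒜 g = ⊤)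
    (nU : G → ℕ) (bU : ∀ g : G, Module.Basis (Fin (nU g)) F (𝒜 g)) (x : FF ⊗[F] A) :
    x ∈ Submodule.span FF (genericAlg F FF 𝒜 nU bU : Set (FF ⊗[F] A)) := by
  have h1 : ∀ a : A, (1 : FF) ⊗ₜ[F] a ∈
      Submodule.span FF (genericAlg F FF 𝒜 nU bU : Set (FF ⊗[F] A)) := by
    intro a
    have ha : a ∈ ⨆ g, 𝒜 g := by rw [htop]; trivial
    induction ha using Submodule.iSup_induction' with
    | mem g x hx =>
      refine Submodule.span_mono ?_ (comp_le_span_generic hinj 𝒜 nU bU g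
        (Submodule.tmul_mem_baseChange_of_mem 1 hx))
      intro z hz
      exact NonUnitalAlgebra.subset_adjoin F hz.1
    | zero => simp
    | add x y _ _ hx hy => rw [TensorProduct.tmul_add]; exact Submodule.add_mem _ hx hy
  induction x using TensorProduct.induction_on with
  | zero => simp
  | tmul c a =>
    have : c ⊗ₜ[F] a = c • ((1 : FF) ⊗ₜ[F] a) := by simp [TensorProduct.smul_tmul']
    rw [this]
    exact Submodule.smul_mem _ _ (h1 a)
  | add x y hx hy => exact Submodule.add_mem _ hx hy

theorem multAlg_extends {F FF A : Type*} [Field F] [Field FF] [Algebra F FF]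
    [NonUnitalNonAssocRing A] [Module F A] [SMulCommClass F A A] [IsScalarTower F A A]
    (L : NonUnitalSubalgebra F (FF ⊗[F] A)) (m : Module.End F L)
    (hm : m ∈ MultAlg F (A := L)) :
    ∃ φ : Module.End FF (FF ⊗[F] A), ∀ x : L, φ x = (m x : FF ⊗[F] A) := by
  unfold MultAlg at hm
  induction hm using NonUnitalAlgebra.adjoin_induction with
  | mem m hm =>
    rcases hm with ⟨a, rfl⟩ | ⟨a, rfl⟩
    · exact ⟨LinearMap.mulLeft FF (a : FF ⊗[F] A), fun x => by simp⟩
    · exact ⟨LinearMap.mulRight FF (a : FF ⊗[F] A), fun x => by simp⟩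
  | zero => exact ⟨0, fun x => by simp⟩
  | add x y _ _ hx hy =>
    obtain ⟨p, hp⟩ := hx
    obtain ⟨q, hq⟩ := hy
    exact ⟨p + q, fun x => by simp [hp, hq]⟩
  | mul x y _ _ hx hy =>
    obtain ⟨p, hp⟩ := hx
    obtain ⟨q, hq⟩ := hy
    exact ⟨p * q, fun x => by simp [hp, hq]⟩
  | smul r x _ hx =>
    obtain ⟨p, hp⟩ := hx
    exact ⟨algebraMap F FF r • p, fun x => by simp [hp]⟩

theorem center_scalar [FiniteDimensional F A]
    (hinj : Function.Injective (algebraMap (MvPolynomial (G × ℕ × ℕ) F) FF))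
    (𝒜 : G → Submodule F A) (htop : ⨆ g, 𝒜 g = ⊤) (hne : ∃ a : A, a ≠ 0)
    (hbase : ∀ φ : Module.End F A,
      φ ∈ centroid F (A := A) ⊓ endGrading F 𝒜 1 ↔ ∃ c : F, φ = c • (1 : Module.End F A))
    (nU : G → ℕ) (bU : ∀ g : G, Module.Basis (Fin (nU g)) F (𝒜 g))
    (m : Module.End F (genericAlg F FF 𝒜 nU bU))
    (hm : m ∈ centerMultE F FF 𝒜 (genericAlg F FF 𝒜 nU bU)) :
    ∃ c : FF, ∀ x, (m x : FF ⊗[F] A) = c • (x : FF ⊗[F] A) := by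
  obtain ⟨hm1, hm2, hm3⟩ := hm
  obtain ⟨φ, hφ⟩ := multAlg_extends _ m hm1
  have hl : ∀ a x, m (a * x) = a * m x := by
    intro a x
    have := hm2 (LinearMap.mulLeft F a) (NonUnitalAlgebra.subset_adjoin F (Or.inl ⟨a, rfl⟩))
    simpa using LinearMap.congr_fun this x
  have hr : ∀ a x, m (x * a) = m x * a := by
    intro a x
    have := hm2 (LinearMap.mulRight F a) (NonUnitalAlgebra.subset_adjoin F (Or.inr ⟨a, rfl⟩))
    simpa using LinearMap.congr_fun this x
  have h12 : ∀ x y, φ (x * y) = x * φ y ∧ φ (x * y) = φ x * y := by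
    intro x y
    induction span_genericAlg hinj 𝒜 htop nU bU x using Submodule.span_induction with
    | mem x hx =>
      induction span_genericAlg hinj 𝒜 htop nU bU y using Submodule.span_induction with
      | mem y hy =>
        have e := hφ (⟨x, hx⟩ * ⟨y, hy⟩)
        have e1 := hφ ⟨x, hx⟩
        have e2 := hφ ⟨y, hy⟩
        constructor
        · rw [hl] at e
          rw [e2]; exact e
        · rw [hr] at e
          rw [e1]; exact e
      | zero => simp
      | add y z _ _ hy hz => simp only [mul_add, map_add, hy.1, hz.1, true_and]
                             rw [← hy.1, ← hz.1, hy.2, hz.2]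
      | smul c y _ hy =>
        rw [mul_smul_comm, map_smul, map_smul, mul_smul_comm, mul_smul_comm, ← hy.1, ← hy.2]
        exact ⟨rfl, rfl⟩
    | zero => simp
    | add w z _ _ hw hz =>
      rw [add_mul, map_add, map_add, add_mul, add_mul, ← hw.1, ← hz.1, ← hw.2, ← hz.2]
      exact ⟨rfl, rfl⟩
    | smul c w _ hw =>
      rw [smul_mul_assoc, map_smul, map_smul, smul_mul_assoc, smul_mul_assoc, ← hw.1, ← hw.2]
      exact ⟨rfl, rfl⟩
  obtain ⟨c, hc⟩ := centroid_baseChange 𝒜 hne hbase φ (fun x y => (h12 x y).1)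
    (fun x y => (h12 x y).2) (by
      intro g x hx
      induction comp_le_span_generic hinj 𝒜 nU bU g hx using Submodule.span_induction with
      | mem x hx' =>
        have hxL : x ∈ genericAlg F FF 𝒜 nU bU := NonUnitalAlgebra.subset_adjoin F hx'.1
        have := hm3 g ⟨x, hxL⟩ hx'.2
        rw [one_mul] at this
        have e := hφ ⟨x, hxL⟩
        change φ x = _ at e
        rw [e]
        exact this
      | zero => simp
      | add x y hx' hy' ihx ihy =>
        have hle : Submodule.span FF ({x | x ∈ genericElems F FF 𝒜 nU bU ∧
            x ∈ (𝒜 g).baseChange FF}) ≤ (𝒜 g).baseChange FF :=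
          Submodule.span_le.2 fun z hz => hz.2
        rw [map_add]
        exact Submodule.add_mem _ (ihx (hle hx')) (ihy (hle hy'))
      | smul c x hx' ihx =>
        have hle : Submodule.span FF ({x | x ∈ genericElems F FF 𝒜 nU bU ∧
            x ∈ (𝒜 g).baseChange FF}) ≤ (𝒜 g).baseChange FF :=
          Submodule.span_le.2 fun z hz => hz.2
        rw [map_smul]
        exact Submodule.smul_mem _ _ (ihx (hle hx')))
  exact ⟨c, fun x => by rw [← hφ, hc]⟩

end genericLemmas

/-- Generic-elements setup: `U` a `G`-graded simple algebra (`G` abelian), finite-dimensional over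
`F = Γ(U)_e`, and `F_U ⊆ Ũ = FF ⊗ U` its algebra of generic elements, where `FF` is an extension
of the fraction field of the polynomial ring `F[T]`.  Then `Z_U = Z(M(F_U))_e` is isomorphic as an
`F`-algebra to an `F`-subalgebra of `FF`; in particular it is a commutative integral domain. -/
theorem center_of_generic_mult_algebra_embeds_in_field
    {F : Type*} [Field F] {G : Type*} [CommGroup G] [DecidableEq G]
    {FF : Type*} [Field FF] [Algebra F FF] [Algebra (MvPolynomial (G × ℕ × ℕ) F) FF]
    [IsScalarTower F (MvPolynomial (G × ℕ × ℕ) F) FF]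
    (hinj : Function.Injective (algebraMap (MvPolynomial (G × ℕ × ℕ) F) FF))
    {A : Type*} [NonUnitalNonAssocRing A] [Module F A] [SMulCommClass F A A]
    [IsScalarTower F A A] [FiniteDimensional F A]
    (𝒜 : G → Submodule F A) (hgr : IsAlgGrading F 𝒜) (hsimp : IsGradedSimple F 𝒜)
    (hbase : ∀ φ : Module.End F A,
      φ ∈ centroid F (A := A) ⊓ endGrading F 𝒜 1 ↔ ∃ c : F, φ = c • (1 : Module.End F A))
    (nU : G → ℕ) (bU : ∀ g : G, Module.Basis (Fin (nU g)) F (𝒜 g)) :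
    ∃ θ : Module.End F ↥(genericAlg F FF 𝒜 nU bU) → FF,
      Set.InjOn θ (centerMultE F FF 𝒜 (genericAlg F FF 𝒜 nU bU)) ∧
      θ 0 = 0 ∧
      (∀ x ∈ centerMultE F FF 𝒜 (genericAlg F FF 𝒜 nU bU),
        ∀ y ∈ centerMultE F FF 𝒜 (genericAlg F FF 𝒜 nU bU),
          θ (x + y) = θ x + θ y ∧ θ (x * y) = θ x * θ y) ∧
      (∀ c : F, ∀ x ∈ centerMultE F FF 𝒜 (genericAlg F FF 𝒜 nU bU),
          θ (c • x) = algebraMap F FF c * θ x) ∧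
      -- in particular `Z_U` is a commutative integral domain
      (∀ x ∈ centerMultE F FF 𝒜 (genericAlg F FF 𝒜 nU bU),
        ∀ y ∈ centerMultE F FF 𝒜 (genericAlg F FF 𝒜 nU bU), x * y = y * x) ∧
      (∀ x ∈ centerMultE F FF 𝒜 (genericAlg F FF 𝒜 nU bU),
        ∀ y ∈ centerMultE F FF 𝒜 (genericAlg F FF 𝒜 nU bU),
          x * y = 0 → x = 0 ∨ y = 0) := by
  classical
  have htop : ⨆ g, 𝒜 g = ⊤ := hgr.1.submodule_iSup_eq_top
  have hne : ∃ a : A, a ≠ 0 := by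
    obtain ⟨a, b, hab⟩ := hsimp.1
    exact ⟨a * b, hab⟩
  have hsc := center_scalar (FF := FF) hinj 𝒜 htop hne hbase nU bU
  obtain ⟨x0, hx0⟩ : ∃ x0 : genericAlg F FF 𝒜 nU bU, (x0 : TensorProduct F FF A) ≠ 0 := by
    by_contra! h
    obtain ⟨a, ha⟩ := hne
    have hs := span_genericAlg (FF := FF) hinj 𝒜 htop nU bU (TensorProduct.tmul F (1 : FF) a)
    have hb : Submodule.span FF (genericAlg F FF 𝒜 nU bU : Set (TensorProduct F FF A)) ≤ ⊥ :=
      Submodule.span_le.2 fun z hz => h ⟨z, hz⟩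
    have h0 := (Submodule.mem_bot FF).1 (hb hs)
    obtain ⟨π, hπ⟩ : ∃ π : Module.Dual F FF, π 1 ≠ 0 := by
      by_contra! h
      exact one_ne_zero ((Module.forall_dual_apply_eq_zero_iff F (1 : FF)).1 h)
    have := congrArg (contr π) h0
    rw [contr_tmul, map_zero] at this
    exact (smul_ne_zero hπ ha) this
  let P : Module.End F ↥(genericAlg F FF 𝒜 nU bU) → FF → Prop := fun m c =>
    ∀ x, (m x : TensorProduct F FF A) = c • (x : TensorProduct F FF A)
  have huniq : ∀ m c d, P m c → P m d → c = d := by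
    intro m c d hc hd
    have := (hc x0).symm.trans (hd x0)
    exact smul_left_injective FF hx0 this
  let θ : Module.End F ↥(genericAlg F FF 𝒜 nU bU) → FF := fun m =>
    if h : ∃ c, P m c then h.choose else 0
  have hθ : ∀ m c, P m c → θ m = c := by
    intro m c hc
    have h : ∃ c, P m c := ⟨c, hc⟩
    have : θ m = h.choose := dif_pos h
    rw [this]
    exact huniq m _ _ h.choose_spec hc
  have hP : ∀ m ∈ centerMultE F FF 𝒜 (genericAlg F FF 𝒜 nU bU), P m (θ m) := by
    intro m hm
    obtain ⟨c, hc⟩ := hsc m hm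
    rw [hθ m c hc]; exact hc
  have hPinj : ∀ m n c, P m c → P n c → m = n := by
    intro m n c h1 h2
    apply LinearMap.ext
    intro x
    apply Subtype.ext
    rw [h1, h2]
  have hP0 : P 0 0 := fun x => by simp
  have hPmul : ∀ m n c d, P m c → P n d → P (m * n) (c * d) := by
    intro m n c d h1 h2 x
    rw [Module.End.mul_apply, h1, h2, smul_smul]
  refine ⟨θ, ?_, hθ 0 0 hP0, ?_, ?_, ?_, ?_⟩
  · intro m hm n hn h
    exact hPinj m n (θ m) (hP m hm) (h ▸ hP n hn)
  · intro x hx y hy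
    refine ⟨hθ _ _ ?_, hθ _ _ (hPmul _ _ _ _ (hP x hx) (hP y hy))⟩
    intro z
    rw [LinearMap.add_apply, add_smul, ← hP x hx, ← hP y hy]; rfl
  · intro c x hx
    apply hθ
    intro z
    rw [LinearMap.smul_apply, mul_smul, ← hP x hx, algebraMap_smul]; rfl
  · intro x hx y hy
    exact hx.2.1 y hy.1
  · intro x hx y hy h
    have h1 := hPmul _ _ _ _ (hP x hx) (hP y hy)
    rw [h] at h1
    rcases mul_eq_zero.1 (huniq _ _ _ h1 hP0) with h2 | h2
    · left; exact hPinj x 0 0 (h2 ▸ hP x hx) hP0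
    · right; exact hPinj y 0 0 (h2 ▸ hP y hy) hP0
end

section
/- Let U and V be finite-dimensional G-graded algebras over an algebraically closed field F. Suppose that for some field extension F ⊆ F̃ and some F-automorphism σ of F̃ there exists a G-graded isomorphism of F-algebras φ: F̃ ⊗_F U → F̃ ⊗_F V such that φ(α ⊗ u) = σ(α)·φ(1 ⊗ u) for all α ∈ F̃ and u ∈ U. Then U and V are isomorphic as G-graded algebras. -/
open TensorProduct in
/-- elements of `FF ⊗ B` with coefficients in `R` -/
def coefSpan {F FF : Type*} [Field F] [Field FF] [Algebra F FF] (B : Type*)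
    [AddCommGroup B] [Module F B] (R : Subalgebra F FF) : Submodule F (FF ⊗[F] B) :=
  Submodule.span F {x | ∃ r ∈ R, ∃ b : B, x = r ⊗ₜ[F] b}

open TensorProduct in
theorem exists_finite_coefSpan {F FF : Type*} [Field F] [Field FF] [Algebra F FF] {B : Type*}
    [AddCommGroup B] [Module F B] (x : FF ⊗[F] B) :
    ∃ S : Finset FF, ∀ R : Subalgebra F FF, (S : Set FF) ⊆ R → x ∈ coefSpan B R := by
  classical
  induction x using TensorProduct.induction_on with
  | zero => exact ⟨∅, fun R _ => Submodule.zero_mem _⟩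
  | tmul r b =>
    refine ⟨{r}, fun R h => Submodule.subset_span ⟨r, ?_, b, rfl⟩⟩
    exact h (by simp)
  | add x y hx hy =>
    obtain ⟨S, hS⟩ := hx
    obtain ⟨T, hT⟩ := hy
    refine ⟨S ∪ T, fun R h => Submodule.add_mem _ (hS R ?_) (hT R ?_)⟩
    · exact fun s hs => h (by simp at hs; simp [hs])
    · exact fun s hs => h (by simp at hs; simp [hs])

open TensorProduct in
theorem exists_finite_coefSpan_map {F FF : Type*} [Field F] [Field FF] [Algebra F FF]
    {A B : Type*} [AddCommGroup A] [Module F A] [FiniteDimensional F A]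
    [AddCommGroup B] [Module F B] (f : A →ₗ[F] FF ⊗[F] B) :
    ∃ S : Finset FF, ∀ R : Subalgebra F FF, (S : Set FF) ⊆ R → ∀ a, f a ∈ coefSpan B R := by
  classical
  let bs := Module.finBasis F A
  choose S hS using fun i => exists_finite_coefSpan (F := F) (f (bs i))
  refine ⟨Finset.univ.biUnion S, fun R h a => ?_⟩
  have : (⊤ : Submodule F A) ≤ (coefSpan B R).comap f := by
    rw [← bs.span_eq, Submodule.span_le]
    rintro _ ⟨i, rfl⟩
    refine hS i R fun s hs => h ?_
    simp only [Finset.coe_biUnion, Set.mem_iUnion]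
    exact ⟨i, by simp, hs⟩
  exact this (Submodule.mem_top (x := a))

theorem exists_point {F FF : Type*} [Field F] [IsAlgClosed F] [Field FF] [Algebra F FF]
    (S : Finset FF) : ∃ l : FF →ₗ[F] F, l 1 = 1 ∧
      ∀ x ∈ Algebra.adjoin F (S : Set FF), ∀ y ∈ Algebra.adjoin F (S : Set FF),
        l (x * y) = l x * l y := by
  set R := Algebra.adjoin F (S : Set FF) with hR
  have hft : Algebra.FiniteType F R :=
    (Subalgebra.fg_iff_finiteType R).1 (Subalgebra.fg_adjoin_finset S)
  obtain ⟨m, hm⟩ := Ideal.exists_maximal R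
  letI : Field (R ⧸ m) := Ideal.Quotient.field m
  haveI : Algebra.FiniteType F (R ⧸ m) :=
    Algebra.FiniteType.of_surjective (Ideal.Quotient.mkₐ F m) (Ideal.Quotient.mkₐ_surjective F m)
  haveI : Module.Finite F (R ⧸ m) := finite_of_finite_type_of_isJacobsonRing F (R ⧸ m)
  have hb : Function.Bijective (algebraMap F (R ⧸ m)) :=
    IsAlgClosed.algebraMap_bijective_of_isIntegral
  let e : F ≃ₐ[F] (R ⧸ m) := AlgEquiv.ofBijective (Algebra.ofId F (R ⧸ m)) hb
  let c : R →ₐ[F] F := e.symm.toAlgHom.comp (Ideal.Quotient.mkₐ F m)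
  obtain ⟨l, hl⟩ := LinearMap.exists_extend (p := Subalgebra.toSubmodule R) c.toLinearMap
  have hlc : ∀ x : R, l (x : FF) = c x := fun x => LinearMap.congr_fun hl x
  refine ⟨l, ?_, fun x hx y hy => ?_⟩
  · have := hlc 1
    simpa using this
  · have h1 := hlc (⟨x, hx⟩ * ⟨y, hy⟩)
    rw [map_mul, ← hlc, ← hlc] at h1
    simpa using h1

open TensorProduct in
/-- specialization of coefficients -/
def spec {F FF : Type*} [Field F] [Field FF] [Algebra F FF] (B : Type*)
    [AddCommGroup B] [Module F B] (l : FF →ₗ[F] F) : FF ⊗[F] B →ₗ[F] B :=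
  (TensorProduct.lid F B).toLinearMap ∘ₗ l.rTensor B

open TensorProduct in
@[simp] theorem spec_tmul {F FF : Type*} [Field F] [Field FF] [Algebra F FF] {B : Type*}
    [AddCommGroup B] [Module F B] (l : FF →ₗ[F] F) (r : FF) (b : B) :
    spec B l (r ⊗ₜ[F] b) = l r • b := by
  simp [spec]

open TensorProduct in
theorem spec_mem {F FF : Type*} [Field F] [Field FF] [Algebra F FF] {B : Type*}
    [AddCommGroup B] [Module F B] (l : FF →ₗ[F] F) (p : Submodule F B) (x : FF ⊗[F] B)
    (hx : x ∈ p.baseChange FF) : spec B l x ∈ p := by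
  rw [Submodule.baseChange_eq_span] at hx
  have key : ∀ c : FF, spec B l (c • x) ∈ p := by
    induction hx using Submodule.span_induction with
    | mem x h =>
      obtain ⟨b, hb, rfl⟩ := h
      intro c
      simp only [TensorProduct.mk_apply, TensorProduct.smul_tmul', spec_tmul]
      exact p.smul_mem _ hb
    | zero => simp
    | add x y _ _ hx hy => intro c; rw [smul_add, map_add]; exact p.add_mem (hx c) (hy c)
    | smul a x _ h => intro c; rw [smul_smul]; exact h _
  simpa using key 1

open TensorProduct in
theorem spec_smul {F FF : Type*} [Field F] [Field FF] [Algebra F FF] {B : Type*}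
    [AddCommGroup B] [Module F B] (l : FF →ₗ[F] F) (R : Subalgebra F FF)
    (hl : ∀ x ∈ R, ∀ y ∈ R, l (x * y) = l x * l y) (r : FF) (hr : r ∈ R) (x : FF ⊗[F] B)
    (hx : x ∈ coefSpan B R) : spec B l (r • x) = l r • spec B l x := by
  induction hx using Submodule.span_induction with
  | mem x h =>
    obtain ⟨s, hs, b, rfl⟩ := h
    simp [TensorProduct.smul_tmul', hl r hr s hs, mul_smul]
  | zero => simp
  | add x y _ _ hx hy => rw [smul_add, map_add, hx, hy, map_add, smul_add]
  | smul a x _ h => rw [smul_comm, map_smul, h, map_smul, smul_comm]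

open TensorProduct in
theorem spec_mul {F FF : Type*} [Field F] [Field FF] [Algebra F FF] {B : Type*}
    [NonUnitalNonAssocRing B] [Module F B] [SMulCommClass F B B] [IsScalarTower F B B]
    (l : FF →ₗ[F] F) (R : Subalgebra F FF)
    (hl : ∀ x ∈ R, ∀ y ∈ R, l (x * y) = l x * l y) (x y : FF ⊗[F] B)
    (hx : x ∈ coefSpan B R) (hy : y ∈ coefSpan B R) :
    spec B l (x * y) = spec B l x * spec B l y := by
  induction hx using Submodule.span_induction with
  | mem x h =>
    obtain ⟨s, hs, b, rfl⟩ := h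
    induction hy using Submodule.span_induction with
    | mem y h =>
      obtain ⟨t, ht, c, rfl⟩ := h
      simp [Algebra.TensorProduct.tmul_mul_tmul, hl s hs t ht, mul_smul, smul_mul_assoc,
        mul_smul_comm]
      rw [smul_comm]
    | zero => simp
    | add x y _ _ hx hy => rw [mul_add, map_add, hx, hy, map_add, mul_add]
    | smul a x _ h => rw [mul_smul_comm, map_smul, h, map_smul, mul_smul_comm]
  | zero => simp
  | add x y _ _ hx hy => rw [add_mul, map_add, hx, hy, map_add, add_mul]
  | smul a x _ h => rw [smul_mul_assoc, map_smul, h, map_smul, smul_mul_assoc]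

open TensorProduct in
theorem spec_comp {F FF : Type*} [Field F] [Field FF] [Algebra F FF] {A B : Type*}
    [AddCommGroup A] [Module F A] [AddCommGroup B] [Module F B]
    (l : FF →ₗ[F] F) (R : Subalgebra F FF)
    (hl : ∀ x ∈ R, ∀ y ∈ R, l (x * y) = l x * l y)
    (k : FF ⊗[F] B →ₗ[FF] FF ⊗[F] A) (hk : ∀ b, k (1 ⊗ₜ b) ∈ coefSpan A R)
    (x : FF ⊗[F] B) (hx : x ∈ coefSpan B R) :
    spec A l (k (1 ⊗ₜ spec B l x)) = spec A l (k x) := by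
  induction hx using Submodule.span_induction with
  | mem x h =>
    obtain ⟨s, hs, b, rfl⟩ := h
    have e1 : s ⊗ₜ[F] b = s • ((1 : FF) ⊗ₜ[F] b) := by simp [TensorProduct.smul_tmul']
    have e2 : (1 : FF) ⊗ₜ[F] (spec B l (s ⊗ₜ[F] b)) = (algebraMap F FF (l s)) • (1 : FF) ⊗ₜ[F] b := by
      simp
    rw [e2, k.map_smul, e1, k.map_smul, spec_smul l R hl s hs _ (hk b), algebraMap_smul, map_smul]
  | zero => simp
  | add x y _ _ hx hy =>
    rw [map_add, TensorProduct.tmul_add, map_add, map_add, hx, hy, map_add, map_add]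
  | smul a x _ h =>
    rw [map_smul, TensorProduct.tmul_smul, ← algebraMap_smul FF a, ← algebraMap_smul FF a x,
      k.map_smul, k.map_smul, algebraMap_smul, algebraMap_smul, map_smul, map_smul, h]

open TensorProduct in
theorem graded_iso_of_linear
    {F : Type*} [Field F] [IsAlgClosed F] {G : Type*} [CommGroup G] [DecidableEq G]
    {A B : Type*}
    [NonUnitalNonAssocRing A] [Module F A] [SMulCommClass F A A] [IsScalarTower F A A]
    [NonUnitalNonAssocRing B] [Module F B] [SMulCommClass F B B] [IsScalarTower F B B]
    [FiniteDimensional F A] [FiniteDimensional F B]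
    (𝒜 : G → Submodule F A) (ℬ : G → Submodule F B)
    (FF : Type*) [Field FF] [Algebra F FF]
    (φ : (FF ⊗[F] A) ≃ₗ[FF] (FF ⊗[F] B))
    (hmul : ∀ x y : FF ⊗[F] A, φ (x * y) = φ x * φ y)
    (h1 : ∀ g : G, ∀ x ∈ (𝒜 g).baseChange FF, φ x ∈ (ℬ g).baseChange FF)
    (h2 : ∀ g : G, ∀ x ∈ (ℬ g).baseChange FF, φ.symm x ∈ (𝒜 g).baseChange FF) :
    IsGradedIso F 𝒜 ℬ := by
  classical
  let f : A →ₗ[F] FF ⊗[F] B := (φ.toLinearMap.restrictScalars F) ∘ₗ (TensorProduct.mk F FF A 1)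
  let k : B →ₗ[F] FF ⊗[F] A :=
    (φ.symm.toLinearMap.restrictScalars F) ∘ₗ (TensorProduct.mk F FF B 1)
  have hf : ∀ a, f a = φ (1 ⊗ₜ a) := fun a => rfl
  have hk : ∀ a, k a = φ.symm (1 ⊗ₜ a) := fun a => rfl
  obtain ⟨S, hS⟩ := exists_finite_coefSpan_map f
  obtain ⟨T, hT⟩ := exists_finite_coefSpan_map k
  obtain ⟨l, hl1, hl⟩ := exists_point (F := F) (S ∪ T)
  set R := Algebra.adjoin F ((S ∪ T : Finset FF) : Set FF) with hR
  have hST : ((S ∪ T : Finset FF) : Set FF) ⊆ R := Algebra.subset_adjoin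
  have hS' := hS R (fun s hs => hST (by simp at hs; simp [hs]))
  have hT' := hT R (fun s hs => hST (by simp at hs; simp [hs]))
  have hAB : ∀ a, spec A l (k (spec B l (f a))) = a := fun a => by
    have := spec_comp l R hl φ.symm.toLinearMap hT' (f a) (hS' a)
    refine this.trans ?_
    simp [hf, hl1]
  have hBA : ∀ a, spec B l (f (spec A l (k a))) = a := fun a => by
    have := spec_comp l R hl φ.toLinearMap hS' (k a) (hT' a)
    refine this.trans ?_
    simp [hk, hl1]
  refine ⟨LinearEquiv.ofLinearMap (spec B l ∘ₗ f) (spec A l ∘ₗ k) (LinearMap.ext hBA)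
    (LinearMap.ext hAB), fun x y => ?_, fun g => le_antisymm ?_ ?_⟩
  · change spec B l (f (x * y)) = spec B l (f x) * spec B l (f y)
    rw [← spec_mul l R hl _ _ (hS' x) (hS' y), hf, hf, hf, ← hmul,
      Algebra.TensorProduct.tmul_mul_tmul, one_mul]
  · rintro _ ⟨a, ha, rfl⟩
    exact spec_mem l _ _ (h1 g _ (Submodule.tmul_mem_baseChange_of_mem 1 ha))
  · intro b hb
    exact ⟨spec A l (k b), spec_mem l _ _ (h2 g _ (Submodule.tmul_mem_baseChange_of_mem 1 hb)),
      hBA b⟩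

open TensorProduct in
theorem rTensor_mem_baseChange {F FF : Type*} [Field F] [Field FF] [Algebra F FF] {B : Type*}
    [AddCommGroup B] [Module F B] (l : FF →ₗ[F] FF) (p : Submodule F B) (x : FF ⊗[F] B)
    (hx : x ∈ p.baseChange FF) : l.rTensor B x ∈ p.baseChange FF := by
  rw [Submodule.baseChange_eq_span] at hx
  have key : ∀ c : FF, l.rTensor B (c • x) ∈ p.baseChange FF := by
    induction hx using Submodule.span_induction with
    | mem x h =>
      obtain ⟨b, hb, rfl⟩ := h
      intro c
      simp only [TensorProduct.mk_apply, TensorProduct.smul_tmul', LinearMap.rTensor_tmul]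
      exact Submodule.tmul_mem_baseChange_of_mem _ hb
    | zero => simp
    | add x y _ _ hx hy =>
      intro c; rw [smul_add, map_add]; exact Submodule.add_mem _ (hx c) (hy c)
    | smul a x _ h => intro c; rw [smul_smul]; exact h _
  simpa using key 1

open TensorProduct in
theorem rTensor_alg_mul {F FF : Type*} [Field F] [Field FF] [Algebra F FF] {B : Type*}
    [NonUnitalNonAssocRing B] [Module F B] [SMulCommClass F B B] [IsScalarTower F B B]
    (τ : FF ≃ₐ[F] FF) (x y : FF ⊗[F] B) :
    (τ.toLinearMap.rTensor B) (x * y) = τ.toLinearMap.rTensor B x * τ.toLinearMap.rTensor B y := by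
  induction x using TensorProduct.induction_on with
  | zero => simp
  | tmul r b =>
    induction y using TensorProduct.induction_on with
    | zero => simp
    | tmul s c => simp [Algebra.TensorProduct.tmul_mul_tmul]
    | add x y hx hy => rw [mul_add, map_add, hx, hy, map_add, mul_add]
  | add x y hx hy => rw [add_mul, map_add, hx, hy, map_add, add_mul]

open TensorProduct in
theorem rTensor_alg_smul {F FF : Type*} [Field F] [Field FF] [Algebra F FF] {B : Type*}
    [AddCommGroup B] [Module F B]
    (τ : FF ≃ₐ[F] FF) (c : FF) (y : FF ⊗[F] B) :
    (τ.toLinearMap.rTensor B) (c • y) = τ c • τ.toLinearMap.rTensor B y := by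
  induction y using TensorProduct.induction_on with
  | zero => simp
  | tmul s c => simp [TensorProduct.smul_tmul']
  | add x y hx hy => rw [smul_add, map_add, hx, hy, map_add, smul_add]

open TensorProduct in
/-- **Lemma (key technical step).** Let `A`, `B` be finite-dimensional `G`-graded algebras over an
algebraically closed field `F`.  If for some field extension `F ⊆ F̃` and some `F`-automorphism
`σ` of `F̃` there is a `G`-graded isomorphism of `F`-algebras
`φ : F̃ ⊗ A → F̃ ⊗ B` with `φ(α ⊗ u) = σ(α) • φ(1 ⊗ u)`, then `A` and `B` are isomorphic as
`G`-graded algebras. -/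
theorem graded_iso_of_semilinear_graded_iso_of_scalar_extension
    {F : Type*} [Field F] [IsAlgClosed F] {G : Type*} [CommGroup G] [DecidableEq G]
    {A B : Type*}
    [NonUnitalNonAssocRing A] [Module F A] [SMulCommClass F A A] [IsScalarTower F A A]
    [NonUnitalNonAssocRing B] [Module F B] [SMulCommClass F B B] [IsScalarTower F B B]
    [FiniteDimensional F A] [FiniteDimensional F B]
    (𝒜 : G → Submodule F A) (ℬ : G → Submodule F B)
    (hgrA : IsAlgGrading F 𝒜) (hgrB : IsAlgGrading F ℬ)
    (FF : Type*) [Field FF] [Algebra F FF]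
    (σ : FF ≃ₐ[F] FF)
    (φ : (FF ⊗[F] A) ≃ₗ[F] (FF ⊗[F] B))
    (hmul : ∀ x y : FF ⊗[F] A, φ (x * y) = φ x * φ y)
    (hgraded : ∀ g : G,
      (((𝒜 g).baseChange FF).restrictScalars F).map (φ : (FF ⊗[F] A) →ₗ[F] (FF ⊗[F] B)) =
        ((ℬ g).baseChange FF).restrictScalars F)
    (hsemilinear : ∀ (α : FF) (u : A), φ (α ⊗ₜ[F] u) = σ α • φ ((1 : FF) ⊗ₜ[F] u)) :
    IsGradedIso F 𝒜 ℬ := by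
  have hsm : ∀ (c : FF) (x : FF ⊗[F] A), φ (c • x) = σ c • φ x := by
    intro c x
    induction x using TensorProduct.induction_on with
    | zero => simp
    | tmul r b =>
      rw [TensorProduct.smul_tmul', hsemilinear, hsemilinear r, smul_smul, smul_eq_mul, map_mul]
    | add x y hx hy => rw [smul_add, map_add, hx, hy, map_add, smul_add]
  have i1 : ∀ x : FF ⊗[F] B,
      σ.symm.toLinearMap.rTensor B (σ.toLinearMap.rTensor B x) = x := by
    intro x
    rw [← LinearMap.comp_apply, ← LinearMap.rTensor_comp]
    have : σ.symm.toLinearMap ∘ₗ σ.toLinearMap = LinearMap.id := by ext; simp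
    rw [this]; simp
  have i2 : ∀ x : FF ⊗[F] B,
      σ.toLinearMap.rTensor B (σ.symm.toLinearMap.rTensor B x) = x := by
    intro x
    rw [← LinearMap.comp_apply, ← LinearMap.rTensor_comp]
    have : σ.toLinearMap ∘ₗ σ.symm.toLinearMap = LinearMap.id := by ext; simp
    rw [this]; simp
  let Φ : (FF ⊗[F] A) ≃ₗ[FF] (FF ⊗[F] B) :=
    { toFun := fun x => σ.symm.toLinearMap.rTensor B (φ x)
      invFun := fun y => φ.symm (σ.toLinearMap.rTensor B y)
      map_add' := fun x y => by rw [map_add, map_add]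
      map_smul' := fun c x => by
        rw [hsm, rTensor_alg_smul]; simp
      left_inv := fun x => by simp only [i2, LinearEquiv.symm_apply_apply]
      right_inv := fun x => by simp only [i1, LinearEquiv.apply_symm_apply] }
  refine graded_iso_of_linear 𝒜 ℬ FF Φ (fun x y => ?_) (fun g x hx => ?_) (fun g x hx => ?_)
  · change σ.symm.toLinearMap.rTensor B (φ (x * y)) = _
    rw [hmul, rTensor_alg_mul]; rfl
  · refine rTensor_mem_baseChange _ _ _ ?_
    have : φ x ∈ ((ℬ g).baseChange FF).restrictScalars F := by
      rw [← hgraded g]; exact ⟨x, hx, rfl⟩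
    exact this
  · have : σ.toLinearMap.rTensor B x ∈ ((ℬ g).baseChange FF).restrictScalars F :=
      rTensor_mem_baseChange _ _ _ hx
    rw [← hgraded g] at this
    obtain ⟨y, hy, hyx⟩ := this
    change φ.symm (σ.toLinearMap.rTensor B x) ∈ _
    rw [← hyx]
    simpa using hy
end

section
/- Graded Jacobson density theorem: Let R be an associative G-graded algebra, V a graded simple left R-module, and D = End_R^gr(V). If v_1,…,v_n ∈ V are homogeneous elements that are linearly independent over D, then for any w_1,…,w_n ∈ V there exists r ∈ R such that r·v_i = w_i for i = 1,…,n. -/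
noncomputable section

variable {G : Type*} [Group G] [DecidableEq G]
variable {R : Type*} [Ring R] {V : Type*} [AddCommGroup V] [Module R V]

/-- `ℛ` is a `G`-grading of the associative ring `R`. -/
def IsRingGrading (ℛ : G → AddSubgroup R) : Prop :=
  DirectSum.IsInternal ℛ ∧ ∀ (g h : G), ∀ r ∈ ℛ g, ∀ s ∈ ℛ h, r * s ∈ ℛ (g * h)

/-- `𝒱` makes `V` a `G`-graded module over the `G`-graded ring `(R, ℛ)`. -/
def IsModuleGrading (ℛ : G → AddSubgroup R) (𝒱 : G → AddSubgroup V) : Prop :=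
  DirectSum.IsInternal 𝒱 ∧ ∀ (g h : G), ∀ r ∈ ℛ g, ∀ v ∈ 𝒱 h, r • v ∈ 𝒱 (g * h)

/-- a submodule is homogeneous if it is the sum of its intersections with the components -/
def IsHomogSubmoduleOf (𝒱 : G → AddSubgroup V) (W : Submodule R V) : Prop :=
  W.toAddSubgroup = ⨆ g, W.toAddSubgroup ⊓ 𝒱 g

/-- `V` is a graded simple `R`-module: `R•V ≠ 0` and the only homogeneous submodules are `0`
and `V`. -/
def IsGradedSimpleModule (𝒱 : G → AddSubgroup V) : Prop :=
  (∃ (r : R) (v : V), r • v ≠ 0) ∧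
    ∀ W : Submodule R V, IsHomogSubmoduleOf 𝒱 W → W = ⊥ ∨ W = ⊤

/-- the homogeneous component of degree `h` of the ring of `R`-module endomorphisms of `V`:
those `φ` with `φ(V_g) ⊆ V_{gh}` for all `g`. -/
def endModGrading (𝒱 : G → AddSubgroup V) (h : G) : AddSubgroup (Module.End R V) where
  carrier := {φ | ∀ g : G, ∀ x ∈ 𝒱 g, φ x ∈ 𝒱 (g * h)}
  add_mem' := fun hf hg g x hx => (𝒱 _).add_mem (hf g x hx) (hg g x hx)
  zero_mem' := fun g x hx => (𝒱 _).zero_mem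
  neg_mem' := fun hf g x hx => (𝒱 _).neg_mem (hf g x hx)

/-- `D = End_R^gr(V)`: the ring of `R`-module endomorphisms of `V` that are sums of homogeneous
ones. -/
def endModGr (𝒱 : G → AddSubgroup V) : AddSubgroup (Module.End R V) :=
  ⨆ h : G, endModGrading 𝒱 h

end

section Aux
open DirectSum

variable {G : Type*} [Group G] [DecidableEq G]
variable {R : Type*} [Ring R] {V : Type*} [AddCommGroup V] [Module R V]

theorem aux_comp (ℛ : G → AddSubgroup R) (𝒱 : G → AddSubgroup V)
    [Decomposition ℛ] [Decomposition 𝒱]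
    (hmul : ∀ (g h : G), ∀ r ∈ ℛ g, ∀ v ∈ 𝒱 h, r • v ∈ 𝒱 (g * h))
    (r : R) {a : G} {x : V} (hx : x ∈ 𝒱 a) (g : G) :
    (decompose 𝒱 (r • x) (g * a) : V) = (decompose ℛ r g : R) • x := by
  induction r using DirectSum.Decomposition.inductionOn ℛ with
  | zero => simp
  | @homogeneous k m =>
    have h := hmul k a m m.2 x hx
    by_cases hk : k = g
    · subst hk
      rw [decompose_of_mem_same 𝒱 h, decompose_of_mem_same ℛ m.2]
    · rw [decompose_of_mem_ne 𝒱 h (by simpa using hk), decompose_of_mem_ne ℛ m.2 hk, zero_smul]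
  | add r s hr hs =>
    simp only [add_smul, decompose_add, DirectSum.add_apply, AddSubgroup.coe_add, hr, hs]

/-- the left annihilator of a family -/
def auxAnn {ι : Type*} (v : ι → V) (s : Finset ι) : Submodule R R where
  carrier := {r | ∀ i ∈ s, r • v i = 0}
  add_mem' := fun ha hb i hi => by rw [add_smul, ha i hi, hb i hi, add_zero]
  zero_mem' := fun i _ => zero_smul _ _
  smul_mem' := fun c r hr i hi => by rw [smul_eq_mul, mul_smul, hr i hi, smul_zero]

theorem aux_dich {ι : Type*} (ℛ : G → AddSubgroup R) (𝒱 : G → AddSubgroup V)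
    [Decomposition ℛ] [Decomposition 𝒱]
    (hmul : ∀ (g h : G), ∀ r ∈ ℛ g, ∀ v ∈ 𝒱 h, r • v ∈ 𝒱 (g * h))
    (hsimple : IsGradedSimpleModule (R := R) 𝒱)
    (v : ι → V) (hhomog : ∀ i, ∃ g : G, v i ∈ 𝒱 g) (s : Finset ι)
    {a : G} {x : V} (hx : x ∈ 𝒱 a) :
    (∀ r ∈ auxAnn (R := R) v s, r • x = 0) ∨ ∀ y : V, ∃ r ∈ auxAnn (R := R) v s, r • x = y := by
  have hW : IsHomogSubmoduleOf 𝒱 ((auxAnn (R := R) v s).map (LinearMap.toSpanSingleton R V x)) := by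
    classical
    apply le_antisymm
    · rintro _ ⟨r, hr, rfl⟩
      simp only [LinearMap.toSpanSingleton_apply, LinearMap.coe_toAddHom]
      rw [← sum_support_decompose ℛ r, Finset.sum_smul]
      refine sum_mem fun g _ => ?_
      refine AddSubgroup.mem_iSup_of_mem (g * a) ⟨⟨(decompose ℛ r g : R), ?_, rfl⟩,
        hmul g a _ (decompose ℛ r g).2 x hx⟩
      intro i hi
      obtain ⟨b, hb⟩ := hhomog i
      rw [← aux_comp ℛ 𝒱 hmul r hb g, hr i hi]
      simp
    · exact iSup_le fun g => inf_le_left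
  rcases hsimple.2 _ hW with h | h
  · left
    intro r hr
    have : r • x ∈ (auxAnn (R := R) v s).map (LinearMap.toSpanSingleton R V x) := ⟨r, hr, rfl⟩
    rw [h] at this
    simpa using this
  · right
    intro y
    have : y ∈ (auxAnn (R := R) v s).map (LinearMap.toSpanSingleton R V x) := by rw [h]; trivial
    obtain ⟨r, hr, h⟩ := this
    exact ⟨r, hr, h⟩

theorem aux_span {ι : Type*} [DecidableEq ι] (ℛ : G → AddSubgroup R) (𝒱 : G → AddSubgroup V)
    [Decomposition ℛ] [Decomposition 𝒱]
    (hmul : ∀ (g h : G), ∀ r ∈ ℛ g, ∀ v ∈ 𝒱 h, r • v ∈ 𝒱 (g * h))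
    (hsimple : IsGradedSimpleModule (R := R) 𝒱)
    (v : ι → V) (hhomog : ∀ i, ∃ g : G, v i ∈ 𝒱 g) (s : Finset ι) :
    ∀ (b : G) (x : V), x ∈ 𝒱 b → (∀ r ∈ auxAnn (R := R) v s, r • x = 0) →
      ∃ d : ι → Module.End R V, (∀ i, d i ∈ endModGr (R := R) 𝒱) ∧ x = ∑ i ∈ s, d i (v i) := by
  induction s using Finset.induction_on with
  | empty =>
    intro b x _ h
    refine ⟨0, fun i => zero_mem _, ?_⟩
    simpa using h 1 (fun i hi => by simp at hi)
  | insert k s hk ih =>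
    intro b x hx h
    obtain ⟨a, ha⟩ := hhomog k
    have key : ∀ r ∈ auxAnn (R := R) v s, r • v k = 0 → r • x = 0 := by
      intro r hr hrk
      refine h r fun i hi => ?_
      rcases Finset.mem_insert.1 hi with rfl | hi
      · exact hrk
      · exact hr i hi
    -- it suffices to find `φ`
    suffices H : ∃ φ : Module.End R V, φ ∈ endModGrading (R := R) 𝒱 (a⁻¹ * b) ∧
        ∀ r ∈ auxAnn (R := R) v s, r • x = φ (r • v k) by
      obtain ⟨φ, hφ, hφr⟩ := H
      have h1 : φ (v k) ∈ 𝒱 b := by simpa using hφ a _ ha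
      obtain ⟨d, hd, hdx⟩ := ih b (x - φ (v k)) (sub_mem hx h1) (by
        intro r hr
        rw [smul_sub, hφr r hr, map_smul, sub_self])
      refine ⟨Function.update d k φ, ?_, ?_⟩
      · intro i
        by_cases hi : i = k
        · subst hi
          rw [Function.update_self]
          exact AddSubgroup.mem_iSup_of_mem (a⁻¹ * b) hφ
        · simpa [Function.update_of_ne hi] using hd i
      · rw [Finset.sum_insert hk, Function.update_self, ← sub_eq_iff_eq_add', hdx]
        refine Finset.sum_congr rfl fun i hi => ?_
        rw [Function.update_of_ne]
        rintro rfl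
        exact hk hi
    rcases aux_dich ℛ 𝒱 hmul hsimple v hhomog s ha with h0 | hs
    · refine ⟨0, zero_mem _, fun r hr => ?_⟩
      simpa using key r hr (h0 r hr)
    · choose c hc hcv using hs
      have wd : ∀ r ∈ auxAnn (R := R) v s, r • x = c (r • v k) • x := by
        intro r hr
        rw [← sub_eq_zero, ← sub_smul]
        exact key _ (sub_mem hr (hc _)) (by rw [sub_smul, hcv, sub_self])
      let φ : Module.End R V :=
        { toFun := fun y => c y • x
          map_add' := fun y z => by
            have := wd _ (add_mem (hc y) (hc z))
            rw [add_smul (c y) (c z) (v k), hcv, hcv] at this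
            rw [← this, add_smul]
          map_smul' := fun t y => by
            have := wd _ ((auxAnn (R := R) v s).smul_mem t (hc y))
            rw [smul_eq_mul, mul_smul t (c y) (v k), hcv] at this
            rw [← this, mul_smul]; rfl }
      refine ⟨φ, ?_, wd⟩
      intro g y hy
      have hgr : (decompose ℛ (c y) (g * a⁻¹) : R) • v k = y := by
        rw [← aux_comp ℛ 𝒱 hmul (c y) ha, hcv, inv_mul_cancel_right, decompose_of_mem_same 𝒱 hy]
      have hmem : (decompose ℛ (c y) (g * a⁻¹) : R) ∈ auxAnn (R := R) v s := by
        intro i hi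
        obtain ⟨e, he⟩ := hhomog i
        rw [← aux_comp ℛ 𝒱 hmul _ he, hc y i hi]
        simp
      have h2 := wd _ hmem
      rw [hgr] at h2
      change c y • x ∈ _
      rw [← h2, ← mul_assoc]
      exact hmul _ _ _ (decompose ℛ (c y) (g * a⁻¹)).2 _ hx

end Aux

/-- **Graded Jacobson density theorem.**  Let `V` be a graded simple left module over the
`G`-graded associative ring `R` and `D = End_R^gr(V)`.  If `v 1, …, v n` are homogeneous elements
of `V` linearly independent over `D`, then for any `w 1, …, w n` there is `r ∈ R` with
`r • v i = w i` for all `i`. -/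
theorem graded_jacobson_density
    {G : Type*} [Group G] [DecidableEq G]
    {R : Type*} [Ring R] {V : Type*} [AddCommGroup V] [Module R V]
    (ℛ : G → AddSubgroup R) (𝒱 : G → AddSubgroup V)
    (hR : IsRingGrading ℛ) (hV : IsModuleGrading ℛ 𝒱)
    (hsimple : IsGradedSimpleModule (R := R) 𝒱)
    {n : ℕ} (v : Fin n → V)
    (hhomog : ∀ i, ∃ g : G, v i ∈ 𝒱 g)
    (hindep : ∀ d : Fin n → Module.End R V, (∀ i, d i ∈ endModGr (R := R) 𝒱) →
        ∑ i, d i (v i) = 0 → ∀ i, d i = 0) :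
    ∀ w : Fin n → V, ∃ r : R, ∀ i, r • v i = w i := by
  classical
  letI := hR.1.chooseDecomposition
  letI := hV.1.chooseDecomposition
  intro w
  have main : ∀ i, ∃ r ∈ auxAnn (R := R) v (Finset.univ.erase i), r • v i = w i := by
    intro i
    obtain ⟨a, ha⟩ := hhomog i
    rcases aux_dich ℛ 𝒱 hV.2 hsimple v hhomog (Finset.univ.erase i) ha with h | h
    · exfalso
      obtain ⟨d, hd, hx⟩ := aux_span ℛ 𝒱 hV.2 hsimple v hhomog (Finset.univ.erase i) a _ ha h
      have h1 : (1 : Module.End R V) ∈ endModGr (R := R) 𝒱 :=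
        AddSubgroup.mem_iSup_of_mem (1 : G) (fun g x hx => by simpa using hx)
      have h2 := hindep (Function.update d i (-1)) (by
        intro j
        by_cases hj : j = i
        · subst hj
          simpa using h1
        · simpa [Function.update_of_ne hj] using hd j) (by
        rw [← Finset.add_sum_erase _ _ (Finset.mem_univ i), Function.update_self,
          Finset.sum_congr rfl (g := fun j => d j (v j)), ← hx]
        · simp
        · intro j hj
          rw [Function.update_of_ne (Finset.ne_of_mem_erase hj)]) i
      rw [Function.update_self, neg_eq_zero] at h2
      obtain ⟨r, x, hrx⟩ := hsimple.1
      exact hrx (by simpa using congrArg (fun f : Module.End R V => f (r • x)) h2)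
    · exact h (w i)
  choose r hr hrw using main
  refine ⟨∑ i, r i, fun j => ?_⟩
  rw [Finset.sum_smul, Finset.sum_eq_single j]
  · exact hrw j
  · intro i _ hij
    exact hr i j (Finset.mem_erase.2 ⟨hij.symm, Finset.mem_univ _⟩)
  · simp
end
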